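/- For a compact metric space X and an integer n, the following are equivalent: (1) dim_F X ≤ n for every field F; (2) dim_{Z/pZ} X ≤ n for every prime p and dim_Q X ≤ n; (3) dim_Z(X × X) ≤ 2n + 1. -/

import Mathlib

open Set Function

open scoped ENNReal

noncomputable section

/-! ### Alexander–Spanier (Čech) cohomology -/

namespace AS

variable (A : Type*) [AddCommGroup A]

/-- Alexander–Spanier `n`-cochains on `X` with coefficients in `A`. -/
abbrev Cochain (X : Type*) (n : ℕ) : Type _ := (Fin (n + 1) → X) → A

/-- The Alexander–Spanier coboundary operator. -/
def d (X : Type*) (n : ℕ) : Cochain A X n →+ Cochain A X (n + 1) :=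
  AddMonoidHom.mk' (fun φ s => ∑ i : Fin (n + 2), ((-1 : ℤ) ^ (i : ℕ)) • φ (s ∘ i.succAbove))
    (fun φ ψ => funext fun s => by
      simp [smul_add, Finset.sum_add_distrib])

/-- An open cover of `X`. -/
def IsOpenCover {X : Type*} [TopologicalSpace X] (U : Set (Set X)) : Prop :=
  (∀ u ∈ U, IsOpen u) ∧ ⋃₀ U = univ

/-- A tuple is `U`-small if it is contained in a single member of `U`. -/
def Small {X : Type*} (U : Set (Set X)) {k : ℕ} (s : Fin k → X) : Prop :=
  ∃ u ∈ U, ∀ i, s i ∈ u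

/-- The subgroup of cochains vanishing on all tuples that are small with respect to
some open cover (i.e. vanishing in a neighbourhood of the diagonal). -/
def locZero (X : Type*) [TopologicalSpace X] (n : ℕ) : AddSubgroup (Cochain A X n) where
  carrier := {φ | ∃ U, IsOpenCover U ∧ ∀ s : Fin (n + 1) → X, Small U s → φ s = 0}
  zero_mem' := ⟨{univ}, ⟨fun u hu => by rw [mem_singleton_iff] at hu; rw [hu]; exact isOpen_univ,
      by simp⟩, fun s _ => rfl⟩
  add_mem' := by
    rintro φ ψ ⟨U, ⟨hUo, hUc⟩, hφ⟩ ⟨W, ⟨hWo, hWc⟩, hψ⟩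
    refine ⟨(fun p : Set X × Set X => p.1 ∩ p.2) '' (U ×ˢ W), ⟨?_, ?_⟩, ?_⟩
    · rintro _ ⟨⟨u, w⟩, ⟨hu, hw⟩, rfl⟩
      exact (hUo u hu).inter (hWo w hw)
    · apply eq_univ_of_forall
      intro x
      have hx1 : x ∈ ⋃₀ U := hUc ▸ mem_univ x
      have hx2 : x ∈ ⋃₀ W := hWc ▸ mem_univ x
      obtain ⟨u, hu, hxu⟩ := hx1
      obtain ⟨w, hw, hxw⟩ := hx2
      exact ⟨u ∩ w, ⟨⟨u, w⟩, ⟨hu, hw⟩, rfl⟩, hxu, hxw⟩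
    · rintro s ⟨_, ⟨⟨u, w⟩, ⟨hu, hw⟩, rfl⟩, hs⟩
      have h1 : φ s = 0 := hφ s ⟨u, hu, fun i => (hs i).1⟩
      have h2 : ψ s = 0 := hψ s ⟨w, hw, fun i => (hs i).2⟩
      show φ s + ψ s = 0
      rw [h1, h2, add_zero]
  neg_mem' := by
    rintro φ ⟨U, hU, hφ⟩
    exact ⟨U, hU, fun s hs => by show -φ s = 0; rw [hφ s hs, neg_zero]⟩

/-- The Alexander–Spanier cochain complex: cochains modulo locally zero cochains. -/
abbrev QC (X : Type*) [TopologicalSpace X] (n : ℕ) : Type _ := Cochain A X n ⧸ locZero A X n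

lemma d_locZero (X : Type*) [TopologicalSpace X] (n : ℕ) :
    locZero A X n ≤ (locZero A X (n + 1)).comap (d A X n) := by
  rintro φ ⟨U, hU, hφ⟩
  refine ⟨U, hU, fun s ⟨u, hu, hs⟩ => ?_⟩
  show (d A X n φ) s = 0
  have : ∀ i : Fin (n + 2), φ (s ∘ i.succAbove) = 0 :=
    fun i => hφ _ ⟨u, hu, fun j => hs _⟩
  simp only [d, AddMonoidHom.mk'_apply]
  exact Finset.sum_eq_zero fun i _ => by rw [this i, smul_zero]

/-- The induced differential on the Alexander–Spanier complex. -/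
def dQ (X : Type*) [TopologicalSpace X] (n : ℕ) : QC A X n →+ QC A X (n + 1) :=
  QuotientAddGroup.map _ _ (d A X n) (d_locZero A X n)

/-- Cocycles. -/
def cocycles (X : Type*) [TopologicalSpace X] (n : ℕ) : AddSubgroup (QC A X n) :=
  (dQ A X n).ker

/-- Coboundaries (the trivial subgroup in degree `0`). -/
def cobounds (X : Type*) [TopologicalSpace X] (n : ℕ) : AddSubgroup (QC A X n) :=
  match n with
  | 0 => ⊥
  | (m + 1) => (dQ A X m).range

/-- Alexander–Spanier cohomology of `X` with coefficients in `A`; for paracompact Hausdorff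
(e.g. metric) spaces this is naturally isomorphic to Čech cohomology. -/
def ASH (n : ℕ) (X : Type*) [TopologicalSpace X] : Type _ :=
  ↥(cocycles A X n) ⧸ ((cobounds A X n).comap (cocycles A X n).subtype)

instance (n : ℕ) (X : Type*) [TopologicalSpace X] : AddCommGroup (ASH A n X) :=
  inferInstanceAs (AddCommGroup
    (↥(cocycles A X n) ⧸ ((cobounds A X n).comap (cocycles A X n).subtype)))

end AS

namespace AS

variable (A : Type*) [AddCommGroup A]

/-- Pullback of Alexander–Spanier cochains along a map. -/
def pull {X Y : Type*} (f : X → Y) (n : ℕ) : Cochain A Y n →+ Cochain A X n :=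
  AddMonoidHom.mk' (fun φ s => φ (f ∘ s)) (fun φ ψ => rfl)

lemma pull_d {X Y : Type*} (f : X → Y) (n : ℕ) (φ : Cochain A Y n) :
    pull A f (n + 1) (d A Y n φ) = d A X n (pull A f n φ) := rfl

lemma pull_locZero {X Y : Type*} [TopologicalSpace X] [TopologicalSpace Y] {f : X → Y}
    (hf : Continuous f) (n : ℕ) :
    locZero A Y n ≤ (locZero A X n).comap (pull A f n) := by
  rintro φ ⟨U, ⟨hUo, hUc⟩, hφ⟩
  refine ⟨(f ⁻¹' ·) '' U, ⟨?_, ?_⟩, ?_⟩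
  · rintro _ ⟨u, hu, rfl⟩
    exact (hUo u hu).preimage hf
  · apply eq_univ_of_forall
    intro x
    have : f x ∈ ⋃₀ U := hUc ▸ mem_univ _
    obtain ⟨u, hu, hx⟩ := this
    exact ⟨f ⁻¹' u, ⟨u, hu, rfl⟩, hx⟩
  · rintro s ⟨_, ⟨u, hu, rfl⟩, hs⟩
    exact hφ _ ⟨u, hu, fun i => hs i⟩

/-- Pullback on the Alexander–Spanier complex. -/
def pullQ {X Y : Type*} [TopologicalSpace X] [TopologicalSpace Y] {f : X → Y}
    (hf : Continuous f) (n : ℕ) : QC A Y n →+ QC A X n :=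
  QuotientAddGroup.map _ _ (pull A f n) (pull_locZero A hf n)

lemma pullQ_d {X Y : Type*} [TopologicalSpace X] [TopologicalSpace Y] {f : X → Y}
    (hf : Continuous f) (n : ℕ) (x : QC A Y n) :
    pullQ A hf (n + 1) (dQ A Y n x) = dQ A X n (pullQ A hf n x) := by
  refine QuotientAddGroup.induction_on x ?_
  intro φ
  simp only [pullQ, dQ, QuotientAddGroup.map_mk, pull_d]

lemma pullQ_cocycles {X Y : Type*} [TopologicalSpace X] [TopologicalSpace Y] {f : X → Y}
    (hf : Continuous f) (n : ℕ) {x : QC A Y n} (hx : x ∈ cocycles A Y n) :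
    pullQ A hf n x ∈ cocycles A X n := by
  have : dQ A Y n x = 0 := hx
  show dQ A X n (pullQ A hf n x) = 0
  rw [← pullQ_d, this, map_zero]

lemma pullQ_cobounds {X Y : Type*} [TopologicalSpace X] [TopologicalSpace Y] {f : X → Y}
    (hf : Continuous f) (n : ℕ) {x : QC A Y n} (hx : x ∈ cobounds A Y n) :
    pullQ A hf n x ∈ cobounds A X n := by
  match n with
  | 0 =>
    have : x = 0 := hx
    rw [this, map_zero]
    exact (⊥ : AddSubgroup (QC A X 0)).zero_mem
  | (m + 1) =>
    obtain ⟨y, rfl⟩ := hx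
    exact ⟨pullQ A hf m y, (pullQ_d A hf m y).symm⟩

/-- The map on cocycles induced by a continuous map. -/
def pullZ {X Y : Type*} [TopologicalSpace X] [TopologicalSpace Y] {f : X → Y}
    (hf : Continuous f) (n : ℕ) : ↥(cocycles A Y n) →+ ↥(cocycles A X n) :=
  AddMonoidHom.codRestrict ((pullQ A hf n).comp (cocycles A Y n).subtype) _
    (fun x => pullQ_cocycles A hf n x.2)

/-- The homomorphism induced on Alexander–Spanier (Čech) cohomology by a continuous map.
Note the contravariance: a map `f : X → Y` induces `ASHmap : ASH A n Y →+ ASH A n X`. -/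
def ASHmap {X Y : Type*} [TopologicalSpace X] [TopologicalSpace Y] {f : X → Y}
    (hf : Continuous f) (n : ℕ) : ASH A n Y →+ ASH A n X :=
  QuotientAddGroup.map _ _ (pullZ A hf n) (by
    rintro ⟨x, hx⟩ hmem
    have : x ∈ cobounds A Y n := hmem
    exact pullQ_cobounds A hf n this)

end AS

namespace AS

variable (A : Type*) [AddCommGroup A]

/-- Čech cohomology with compact supports: for compact `B` this is the (Alexander–Spanier =
Čech) cohomology of `B` itself, and for noncompact `B` it is that of the one-point
compactification of `B`. -/
def Hc (n : ℕ) (B : Type*) [TopologicalSpace B] : Type _ :=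
  open scoped Classical in
  if CompactSpace B then ASH A n B else ASH A n (OnePoint B)

end AS

/-- The cohomological dimension `dim_A X` of a space `X` with respect to an abelian group `A`:
the supremum of the integers `n` for which there is a locally compact subset `B ⊆ X` with
`H^n_c(B; A) ≠ 0`. -/
noncomputable def cohDim (A : Type*) [AddCommGroup A] (X : Type*) [TopologicalSpace X] : ℕ∞ :=
  sSup {e : ℕ∞ | ∃ n : ℕ, e = (n : ℕ∞) ∧
    ∃ B : Set X, LocallyCompactSpace B ∧ Nontrivial (AS.Hc A n B)}

/-!
Cohomology with compact supports of a locally closed `B ⊆ X` is the cohomology of `X` relative to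
a closed set, so `dim_A X ≤ n` means that `H^k(X, S; A) = 0` for all `k > n` and all closed `S`.
The relative groups are computed by functions of lists of points which are close to each other.

By compactness a relative class has a representative with finitely many values. Hence vanishing over
a field passes to all its vector spaces, which reduces any field to its prime field, and a rational
class is a multiple of an integral one. The Bockstein sequences then bound `dim_ℤ` by one more than
the largest of `dim_ℚ` and all `dim_{ℤ/pℤ}`, and bound each of those by `dim_ℤ`.

It remains that `dim_F (X × X) = 2 dim_F X` over a field `F`. For `≤`, the vanishing of all relative
groups of `X` above degree `n` yields chain maps arbitrarily close to the identity whose image is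
concentrated in degrees at most `n`; their tensor product, combined with the Eilenberg–Zilber maps,
does the same for the product. For `≥`, a nonzero relative class is detected by a linear functional,
and the cross product of two nonzero classes is nonzero.
-/

namespace AlexanderSpanier

open Filter Topology
open Finsupp (single supported linearCombination lmapDomain)

variable {R : Type*} [CommRing R] {X Y : Type*}

section FreeModule

variable {ι E : Type*} [AddCommGroup E] [Module R E] {s : Set ι} {z : ι →₀ R}

lemma map_mem_of_mem_supported (f : (ι →₀ R) →ₗ[R] E) {N : Submodule R E}
    (h : ∀ i ∈ s, f (single i 1) ∈ N) (hz : z ∈ supported R R s) : f z ∈ N := by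
  rw [Finsupp.supported_eq_span_single] at hz
  exact Submodule.span_le (p := N.comap f).2 (image_subset_iff.2 h) hz

lemma map_eq_of_mem_supported (f g : (ι →₀ R) →ₗ[R] E)
    (h : ∀ i ∈ s, f (single i 1) = g (single i 1)) (hz : z ∈ supported R R s) : f z = g z := by
  rw [Finsupp.supported_eq_span_single] at hz
  exact LinearMap.eqOn_span (forall_mem_image.2 h) hz

lemma map_eq_of_single (f g : (ι →₀ R) →ₗ[R] E) (h : ∀ i, f (single i 1) = g (single i 1))
    (z : ι →₀ R) : f z = g z :=
  LinearMap.congr_fun (Finsupp.lhom_ext' fun i => LinearMap.ext_ring (h i)) z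

lemma single_mem {i : ι} (h : i ∈ s) : single i 1 ∈ supported R R s :=
  Finsupp.single_mem_supported R 1 h

end FreeModule

/-! ### Chains and cochains on lists -/

section Coboundary

variable {A B : Type*} [AddCommGroup A] [AddCommGroup B]

/-- The simplicial coboundary of a cochain on lists, a list of length `k + 1` being an ordered
`k`-simplex and the empty list the simplex of the augmentation. -/
def coboundary : (List X → A) →+ (List X → A) :=
  AddMonoidHom.mk' (fun c l => ∑ i : Fin l.length, (-1 : ℤ) ^ (i : ℕ) • c (l.eraseIdx i))
    fun c c' => funext fun l => by simp [Finset.sum_add_distrib]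

lemma coboundary_apply (c : List X → A) (l : List X) :
    coboundary c l = ∑ i : Fin l.length, (-1 : ℤ) ^ (i : ℕ) • c (l.eraseIdx i) := rfl

@[simp] lemma coboundary_nil (c : List X → A) : coboundary c [] = 0 := rfl

lemma coboundary_cons (c : List X → A) (x : X) (l : List X) :
    coboundary c (x :: l) = c l - coboundary (c ∘ List.cons x) l := by
  simp only [coboundary_apply, List.length_cons]
  rw [Fin.sum_univ_succ]
  simp [pow_succ, sub_eq_add_neg]

lemma coboundary_congr {c c' : List X → A} {l : List X}
    (h : ∀ m : List X, m.Sublist l → m.length + 1 = l.length → c m = c' m) :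
    coboundary c l = coboundary c' l := by
  simp only [coboundary_apply]
  refine Finset.sum_congr rfl fun i _ => ?_
  rw [h _ (List.eraseIdx_sublist _ _) (List.length_eraseIdx_add_one i.2)]

lemma coboundary_eq_zero {c : List X → A} {l : List X}
    (h : ∀ m : List X, m.Sublist l → m.length + 1 = l.length → c m = 0) : coboundary c l = 0 := by
  simpa using coboundary_congr (c' := 0) h

lemma coboundary_comp (f : A →+ B) (c : List X → A) (l : List X) :
    coboundary (f ∘ c) l = f (coboundary c l) := by
  simp [coboundary_apply]

lemma coboundary_comp_map (r : X → Y) (c : List Y → A) (l : List X) :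
    coboundary (c ∘ List.map r) l = coboundary c (l.map r) := by
  induction l generalizing c with
  | nil => rfl
  | cons x l ih =>
    rw [List.map_cons, coboundary_cons, coboundary_cons, ← ih]
    rfl

@[simp] lemma coboundary_coboundary (c : List X → A) : coboundary (coboundary c) = 0 := by
  funext l
  induction l generalizing c with
  | nil => rfl
  | cons x l ih =>
    have h : coboundary c ∘ List.cons x = c - coboundary (c ∘ List.cons x) :=
      funext fun l => coboundary_cons c x l
    simp [coboundary_cons, h, ih]

end Coboundary

variable (R) in
/-- The augmented complex of ordered simplicial chains on the full simplex with vertex set `X`. -/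
abbrev Chain (X : Type*) := List X →₀ R

/-- The simplicial boundary operator. -/
def boundary : Chain R X →ₗ[R] Chain R X :=
  linearCombination R (coboundary fun l => single l 1)

/-- The cone operator, which prepends a vertex to every simplex. -/
def cone (x : X) : Chain R X →ₗ[R] Chain R X := lmapDomain R R (List.cons x)

@[simp] lemma cone_single (x : X) (l : List X) (r : R) :
    cone x (single l r) = single (x :: l) r := by
  simp [cone]

lemma boundary_single (l : List X) :
    boundary (single l (1 : R)) = coboundary (fun m => single m 1) l := by
  simp [boundary]

@[simp] lemma boundary_single_nil : boundary (single ([] : List X) (1 : R)) = 0 := by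
  simp [boundary_single]

lemma map_boundary_single {E : Type*} [AddCommGroup E] [Module R E] (f : Chain R X →ₗ[R] E)
    (l : List X) : f (boundary (single l 1)) = coboundary (fun m => f (single m 1)) l := by
  rw [boundary_single]
  exact (coboundary_comp f.toAddMonoidHom (fun m => single m 1) l).symm

lemma linearCombination_boundary_single {E : Type*} [AddCommGroup E] [Module R E] (c : List X → E)
    (l : List X) : linearCombination R c (boundary (single l 1)) = coboundary c l := by
  simp [map_boundary_single]

lemma linearCombination_boundary {E : Type*} [AddCommGroup E] [Module R E] (c : List X → E)
    (z : Chain R X) :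
    linearCombination R c (boundary z) = linearCombination R (coboundary c) z :=
  map_eq_of_single (linearCombination R c ∘ₗ boundary) (linearCombination R (coboundary c))
    (fun l => by simp [linearCombination_boundary_single]) z

lemma boundary_cone (x : X) (z : Chain R X) : boundary (cone x z) = z - cone x (boundary z) := by
  refine map_eq_of_single (boundary ∘ₗ cone x) (LinearMap.id - cone x ∘ₗ boundary) (fun l => ?_) z
  simp only [LinearMap.comp_apply, LinearMap.sub_apply, LinearMap.id_apply, cone_single]
  rw [boundary_single (x :: l), coboundary_cons, map_boundary_single (R := R) (cone x)]
  simp [Function.comp_def]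

lemma boundary_single_cons (x : X) (l : List X) :
    boundary (single (x :: l) (1 : R)) = single l 1 - cone x (boundary (single l 1)) := by
  rw [← cone_single, boundary_cone]

@[simp] lemma boundary_boundary (z : Chain R X) : boundary (boundary z) = 0 :=
  map_eq_of_single (boundary ∘ₗ boundary) 0 (fun l => by
    rw [LinearMap.comp_apply, map_boundary_single (R := R) boundary, funext boundary_single,
      coboundary_coboundary, Pi.zero_apply, LinearMap.zero_apply]) z

lemma boundary_single_mem (l : List X) : boundary (single l (1 : R)) ∈
    supported R R {m : List X | m.Sublist l ∧ m.length + 1 = l.length} := by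
  rw [boundary_single, coboundary_apply]
  refine Submodule.sum_mem _ fun i _ => zsmul_mem (single_mem ?_) _
  exact ⟨List.eraseIdx_sublist _ _, List.length_eraseIdx_add_one i.2⟩

lemma boundary_lmapDomain (r : X → Y) (z : Chain R X) :
    boundary (lmapDomain R R (List.map r) z) = lmapDomain R R (List.map r) (boundary z) :=
  map_eq_of_single (boundary ∘ₗ lmapDomain R R (List.map r))
    (lmapDomain R R (List.map r) ∘ₗ boundary) (fun l => by
      rw [LinearMap.comp_apply, LinearMap.comp_apply, map_boundary_single (lmapDomain R R _)]
      simp only [Finsupp.lmapDomain_apply, Finsupp.mapDomain_single, boundary_single]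
      exact (coboundary_comp_map r (fun m => single m (1 : R)) l).symm) z

variable (R) in
/-- The chains on simplices of length `k` (that is, of dimension `k - 1`) with vertices in `Q`. -/
def chainsOn (k : ℕ) (Q : Set X) : Submodule R (Chain R X) :=
  supported R R {l | l.length = k ∧ ∀ x ∈ l, x ∈ Q}

lemma chainsOn_mono {k : ℕ} {Q Q' : Set X} (h : Q ⊆ Q') : chainsOn R k Q ≤ chainsOn R k Q' :=
  Finsupp.supported_mono fun _ hl => ⟨hl.1, fun x hx => h (hl.2 x hx)⟩

lemma single_mem_chainsOn {k : ℕ} {Q : Set X} {l : List X} (hl : l.length = k)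
    (h : ∀ x ∈ l, x ∈ Q) : single l 1 ∈ chainsOn R k Q :=
  Finsupp.single_mem_supported R 1 ⟨hl, h⟩

lemma boundary_mem_chainsOn {k : ℕ} {Q : Set X} {z : Chain R X} (hz : z ∈ chainsOn R (k + 1) Q) :
    boundary z ∈ chainsOn R k Q :=
  map_mem_of_mem_supported boundary (fun l hl => by
    refine Finsupp.supported_mono (fun m hm => ?_) (boundary_single_mem l)
    exact ⟨by have := hm.2; have := hl.1; omega, fun x hx => hl.2 x (hm.1.subset hx)⟩) hz

lemma cone_mem_chainsOn {k : ℕ} {Q : Set X} {q : X} (hq : q ∈ Q) {z : Chain R X}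
    (hz : z ∈ chainsOn R k Q) : cone q z ∈ chainsOn R (k + 1) Q :=
  map_mem_of_mem_supported (cone q) (fun l hl => by
    rw [cone_single]
    exact single_mem_chainsOn (by simp [hl.1]) (by simpa [hq] using hl.2)) hz

lemma exists_boundary_eq {k : ℕ} {Q : Set X} (hQ : Q.Nonempty) {z : Chain R X}
    (hz : z ∈ chainsOn R k Q) (hb : boundary z = 0) :
    ∃ w ∈ chainsOn R (k + 1) Q, boundary w = z := by
  obtain ⟨q, hq⟩ := hQ
  exact ⟨cone q z, cone_mem_chainsOn hq hz, by rw [boundary_cone, hb, map_zero, sub_zero]⟩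

/-! ### Acyclic carriers -/

lemma exists_forall_of_recursive {ι E : Type*} [Nonempty E] (deg : ι → ℕ)
    {P : ι → (ι → E) → E → Prop}
    (hcongr : ∀ b f g e, (∀ b', deg b' < deg b → f b' = g b') → P b f e → P b g e)
    (hex : ∀ b f, (∀ b', deg b' < deg b → P b' f (f b')) → ∃ e, P b f e) :
    ∃ f : ι → E, ∀ b, P b f (f b) := by
  classical
  let extend : (b : ι) → ((b' : ι) → deg b' < deg b → E) → ι → E := fun b rec b' =>
    if h : deg b' < deg b then rec b' h else Classical.arbitrary E
  let f : ι → E := (measure deg).wf.fix fun b rec => Classical.epsilon (P b (extend b rec))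
  have hf : ∀ b, f b = Classical.epsilon (P b (extend b fun b' _ => f b')) := fun b =>
    (measure deg).wf.fix_eq _ b
  have hext : ∀ b b', deg b' < deg b → f b' = extend b (fun b' _ => f b') b' := fun b b' h => by
    simp [extend, h]
  refine ⟨f, fun b => ?_⟩
  induction b using (measure deg).wf.induction with | h b ih
  obtain ⟨e, he⟩ := hex b f ih
  refine hcongr b _ f _ (fun b' h => (hext b b' h).symm) ?_
  rw [hf b]
  exact Classical.epsilon_spec ⟨e, hcongr b f _ e (hext b) he⟩

section Carrier

variable {ι E : Type*} [AddCommGroup E] [Module R E]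

/-- The acyclic carrier method: solves `∂ H = u + ε H ∂` by recursion on the degree, with the
prescribed values `h₀` in degree zero, `H b` being carried by `W b` and its boundary by `Z b`.
For `u = 0`, `ε = 1` this constructs chain maps, for `ε = -1` chain homotopies. -/
theorem exists_carried_map (deg : ι → ℕ) {D : (ι →₀ R) →ₗ[R] (ι →₀ R)} (hD : ∀ z, D (D z) = 0)
    (dE : E →ₗ[R] E) (S : Set ι) (Z W : ι → Submodule R E) (u : (ι →₀ R) →ₗ[R] E) (ε : R)
    (hsub : ∀ b ∈ S, D (single b 1) ∈
      supported R R {b' | b' ∈ S ∧ deg b' < deg b ∧ W b' ≤ Z b})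
    (hu : ∀ b ∈ S, 0 < deg b → u (single b 1) ∈ Z b)
    (huD : ∀ b ∈ S, dE (u (single b 1)) + ε • u (D (single b 1)) = 0)
    (hex : ∀ b ∈ S, 0 < deg b → ∀ z ∈ Z b, dE z = 0 → ∃ w ∈ W b, dE w = z)
    (h₀ : ι → E) (h₀_spec : ∀ b ∈ S, deg b = 0 → h₀ b ∈ W b ∧ dE (h₀ b) = u (single b 1)) :
    ∃ H : (ι →₀ R) →ₗ[R] E, ∀ b ∈ S, H (single b 1) ∈ W b ∧
      dE (H (single b 1)) = u (single b 1) + ε • H (D (single b 1)) ∧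
      (deg b = 0 → H (single b 1) = h₀ b) := by
  obtain ⟨h, hh⟩ := exists_forall_of_recursive deg (E := E)
    (P := fun b f e => b ∈ S → e ∈ W b ∧
      dE e = u (single b 1) + ε • linearCombination R f (D (single b 1)) ∧ (deg b = 0 → e = h₀ b))
    (fun b f g e hfg he hb => by
      have hD' : linearCombination R f (D (single b 1)) = linearCombination R g (D (single b 1)) :=
        map_eq_of_mem_supported _ _ (fun b' hb' => by simp [hfg b' hb'.2.1]) (hsub b hb)
      exact hD' ▸ he hb)
    (fun b f ih => by
      by_cases hb : b ∈ S
      swap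
      · exact ⟨0, fun h => absurd h hb⟩
      rcases Nat.eq_zero_or_pos (deg b) with h | h
      · have hD' : D (single b (1 : R)) = 0 := by
          simpa using Finsupp.supported_mono (t := ∅) (fun b' hb' => by
            have := hb'.2.1
            omega) (hsub b hb)
        exact ⟨h₀ b, fun _ => ⟨(h₀_spec b hb h).1, by simp [hD', (h₀_spec b hb h).2], fun _ => rfl⟩⟩
      · have hmem : linearCombination R f (D (single b 1)) ∈ Z b :=
          map_mem_of_mem_supported _ (fun b' hb' => by
            simpa using hb'.2.2 (ih b' hb'.2.1 hb'.1).1) (hsub b hb)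
        have hcomm : dE (linearCombination R f (D (single b 1))) = u (D (single b 1)) := by
          have := map_eq_of_mem_supported (dE ∘ₗ linearCombination R f)
            (u + ε • (linearCombination R f ∘ₗ D))
            (fun b' hb' => by simpa using (ih b' hb'.2.1 hb'.1).2.1) (hsub b hb)
          simpa [hD] using this
        obtain ⟨w, hw, hdw⟩ := hex b hb h _
          (Submodule.add_mem _ (hu b hb h) (Submodule.smul_mem _ ε hmem))
          (by rw [map_add, map_smul, hcomm, huD b hb])
        exact ⟨w, fun _ => ⟨hw, hdw, fun h' => absurd h' h.ne'⟩⟩)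
  exact ⟨linearCombination R h, fun b hb => by simpa using hh b hb⟩

end Carrier

/-- An augmentation preserving endomorphism of the complex of ordered chains. -/
structure IsAugmentedMap (P : Chain R X →ₗ[R] Chain R X) : Prop where
  comm : ∀ z, boundary (P z) = P (boundary z)
  map_nil : P (single [] 1) = single [] 1
  mem : ∀ l, P (single l 1) ∈ chainsOn R l.length univ

lemma isAugmentedMap_lmapDomain (r : X → X) :
    IsAugmentedMap (lmapDomain R R (List.map r)) where
  comm := boundary_lmapDomain r
  map_nil := by simp
  mem l := by simpa using single_mem_chainsOn (by simp) (by simp)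

lemma IsAugmentedMap.exists_chain_homotopy {P : Chain R X →ₗ[R] Chain R X} (hP : IsAugmentedMap P)
    {Q : List X → Set X} (hQ_self : ∀ l, ∀ x ∈ l, x ∈ Q l) (hQ_mono : ∀ l m, m ⊆ l → Q m ⊆ Q l)
    (hPQ : ∀ l, P (single l 1) ∈ chainsOn R l.length (Q l)) :
    ∃ H : Chain R X →ₗ[R] Chain R X, ∀ l, H (single l 1) ∈ chainsOn R (l.length + 1) (Q l) ∧
      boundary (H (single l 1)) = single l 1 - P (single l 1) - H (boundary (single l 1)) := by
  have hsub (l : List X) : boundary (single l (1 : R)) ∈ supported R R {m | m ∈ univ ∧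
      m.length < l.length ∧ chainsOn R (m.length + 1) (Q m) ≤ chainsOn R l.length (Q l)} := by
    refine Finsupp.supported_mono (fun m hm => ?_) (boundary_single_mem l)
    refine ⟨trivial, by grind, ?_⟩
    rw [hm.2]
    exact chainsOn_mono (hQ_mono _ _ hm.1.subset)
  have hacyclic (l : List X) (hl : 0 < l.length) (z : Chain R X)
      (hz : z ∈ chainsOn R l.length (Q l)) (hd : boundary z = 0) :
      ∃ w ∈ chainsOn R (l.length + 1) (Q l), boundary w = z :=
    exists_boundary_eq ((List.exists_mem_of_length_pos hl).imp fun x hx => hQ_self l x hx) hz hd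
  obtain ⟨H, hH⟩ := exists_carried_map (R := R) List.length boundary_boundary boundary univ
    (fun l => chainsOn R l.length (Q l)) (fun l => chainsOn R (l.length + 1) (Q l))
    (LinearMap.id - P) (-1) (fun l _ => hsub l)
    (fun l _ _ => by
      rw [LinearMap.sub_apply, LinearMap.id_apply]
      exact Submodule.sub_mem _ (single_mem_chainsOn rfl (hQ_self l)) (hPQ l))
    (fun l _ => by simp [hP.comm]) (fun l _ => hacyclic l) 0
    (fun l _ hl => by
      obtain rfl : l = [] := List.eq_nil_of_length_eq_zero hl
      simp [hP.map_nil])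
  exact ⟨H, fun l => ⟨(hH l trivial).1, by simpa [sub_eq_add_neg] using (hH l trivial).2.1⟩⟩

/-! ### Relative Alexander–Spanier cohomology of metric spaces -/

lemma hasBasis_iInf_pos_principal {α : Type*} {s : ℝ → Set α} (hs : Monotone s) :
    (⨅ δ ∈ Ioi (0 : ℝ), 𝓟 (s δ)).HasBasis (0 < ·) s :=
  hasBasis_biInf_principal (fun δ hδ δ' hδ' => ⟨min δ δ', mem_Ioi.2 (lt_min hδ hδ'),
    hs (min_le_left _ _), hs (min_le_right _ _)⟩) nonempty_Ioi

section Metric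

variable [PseudoMetricSpace X] {A B : Type*} [AddCommGroup A] [AddCommGroup B] {k : ℕ} {S : Set X}

/-- The entries of the list `l` are at distance less than `δ` from each other. -/
def IsSmall (δ : ℝ) (l : List X) : Prop := ∀ x ∈ l, ∀ y ∈ l, dist x y < δ

/-- Some entry of the list `l` is at distance less than `δ` from the set `S`. -/
def IsNear (δ : ℝ) (S : Set X) (l : List X) : Prop := ∃ x ∈ l, ∃ a ∈ S, dist x a < δ

lemma IsSmall.subset {δ : ℝ} {l m : List X} (h : IsSmall δ l) (hm : m ⊆ l) : IsSmall δ m :=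
  fun x hx y hy => h x (hm hx) y (hm hy)

lemma IsSmall.mono {δ δ' : ℝ} {l : List X} (h : IsSmall δ l) (hd : δ ≤ δ') : IsSmall δ' l :=
  fun x hx y hy => (h x hx y hy).trans_le hd

lemma IsNear.mono {δ δ' : ℝ} {l : List X} (h : IsNear δ S l) (hd : δ ≤ δ') : IsNear δ' S l :=
  let ⟨x, hx, a, ha, hxa⟩ := h
  ⟨x, hx, a, ha, hxa.trans_le hd⟩

/-- The filter of lists of length `k`, that is of `(k - 1)`-simplices, which shrink to a point of
`S`. For `S = univ` these are the neighbourhoods of the diagonal of `X ^ k`. -/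
def smallNear (k : ℕ) (S : Set X) : Filter (List X) :=
  ⨅ δ ∈ Ioi (0 : ℝ), 𝓟 {l | l.length = k ∧ IsSmall δ l ∧ IsNear δ S l}

lemma eventually_smallNear {p : List X → Prop} : (∀ᶠ l in smallNear k S, p l) ↔
    ∃ δ > 0, ∀ l : List X, l.length = k → IsSmall δ l → IsNear δ S l → p l := by
  have hmono : Monotone fun δ : ℝ => {l : List X | l.length = k ∧ IsSmall δ l ∧ IsNear δ S l} :=
    fun _ _ hδ _ ⟨hl, hsmall, hnear⟩ => ⟨hl, hsmall.mono hδ, hnear.mono hδ⟩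
  simp only [smallNear, (hasBasis_iInf_pos_principal hmono).eventually_iff, mem_ofPred_eq, and_imp,
    gt_iff_lt]

lemma eventually_length : ∀ᶠ l in smallNear k S, l.length = k :=
  eventually_smallNear.2 ⟨1, one_pos, fun _ hl _ _ => hl⟩

lemma smallNear_mono {S' : Set X} (h : S ⊆ S') : smallNear k S ≤ smallNear k S' := fun p hp => by
  obtain ⟨δ, hδ, hp⟩ := eventually_smallNear.1 hp
  exact eventually_smallNear.2
    ⟨δ, hδ, fun l hl hs ⟨x, hx, a, ha, hd⟩ => hp l hl hs ⟨x, hx, a, h ha, hd⟩⟩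

lemma eventually_smallNear_univ {p : List X → Prop} : (∀ᶠ l in smallNear (k + 1) univ, p l) ↔
    ∃ δ > 0, ∀ l : List X, l.length = k + 1 → IsSmall δ l → p l := by
  refine eventually_smallNear.trans (exists_congr fun δ => and_congr_right fun hδ =>
    forall₂_congr fun l hl => imp_congr_right fun _ => ⟨fun h => h ?_, fun h _ => h⟩)
  obtain ⟨x, hx⟩ := List.exists_mem_of_length_pos (l := l) (by omega)
  exact ⟨x, hx, x, trivial, by simpa using hδ⟩

lemma exists_pos_eventually_forall {j : ℕ} {p : List X → Prop}
    (hp : ∀ᶠ m in smallNear (j + 1) S, p m) : ∃ ρ > 0, ∀ k, ∀ᶠ l in smallNear k S,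
      ∀ m : List X, m.length = j + 1 → (∀ q ∈ m, ∃ x ∈ l, dist q x < ρ) → p m := by
  obtain ⟨δ, hδ, hp⟩ := eventually_smallNear.1 hp
  refine ⟨δ / 3, by positivity, fun k => eventually_smallNear.2 ⟨δ / 3, by positivity,
    fun l _ hsmall ⟨x, hx, a, ha, hxa⟩ m hm hml => hp m hm (fun y hy z hz => ?_) ?_⟩⟩
  · obtain ⟨y', hy', hyy'⟩ := hml y hy
    obtain ⟨z', hz', hzz'⟩ := hml z hz
    rw [dist_comm] at hzz'
    linarith [dist_triangle4 y y' z' z, hsmall y' hy' z' hz']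
  · obtain ⟨y, hy⟩ := List.exists_mem_of_length_pos (l := m) (by omega)
    obtain ⟨y', hy', hyy'⟩ := hml y hy
    exact ⟨y, hy, a, ha, by linarith [dist_triangle4 y y' x a, hsmall y' hy' x hx]⟩

lemma eventually_facets {p : List X → Prop} (hp : ∀ᶠ m in smallNear (k + 1) S, p m) :
    ∀ᶠ l in smallNear (k + 2) S, ∀ m : List X, m.Sublist l → m.length + 1 = l.length → p m := by
  obtain ⟨ρ, hρ, hp⟩ := exists_pos_eventually_forall hp
  filter_upwards [hp (k + 2), eventually_length] with l hl hlk m hml hm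
  exact hl m (by omega) fun q hq => ⟨q, hml.subset hq, by simpa using hρ⟩

lemma coboundary_eventuallyEq {c c' : List X → A} (h : c =ᶠ[smallNear (k + 1) S] c') :
    coboundary c =ᶠ[smallNear (k + 2) S] coboundary c' := by
  filter_upwards [eventually_facets h] with l hl using coboundary_congr hl

lemma coboundary_eventuallyEq_zero {c : List X → A} (h : c =ᶠ[smallNear (k + 1) S] 0) :
    coboundary c =ᶠ[smallNear (k + 2) S] 0 := by
  simpa using coboundary_eventuallyEq h

/-- The cochain `c` represents a cocycle of degree `k` of `X` relative to `S`. -/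
structure IsRelCocycle (k : ℕ) (S : Set X) (c : List X → A) : Prop where
  coboundary_eq : coboundary c =ᶠ[smallNear (k + 2) univ] 0
  eq_zero : c =ᶠ[smallNear (k + 1) S] 0

/-- The cochain `c` represents a coboundary of degree `k` of `X` relative to `S`. For `k = 0` this
means that `c` is constant near the diagonal, since the complex is augmented. -/
def IsRelCoboundary (k : ℕ) (S : Set X) (c : List X → A) : Prop :=
  ∃ b : List X → A, b =ᶠ[smallNear k S] 0 ∧ c =ᶠ[smallNear (k + 1) univ] coboundary b

variable (A) in
/-- Vanishing of the relative Alexander–Spanier cohomology `H^k(X, S; A)`, for `k ≥ 1`. -/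
def RelAcyclic (k : ℕ) (S : Set X) : Prop :=
  ∀ c : List X → A, IsRelCocycle k S c → IsRelCoboundary k S c

lemma IsRelCocycle.congr {c c' : List X → A} (hc : IsRelCocycle k S c)
    (h : c =ᶠ[smallNear (k + 1) univ] c') : IsRelCocycle k S c' :=
  ⟨(coboundary_eventuallyEq h).symm.trans hc.1,
    (h.filter_mono (smallNear_mono (subset_univ S))).symm.trans hc.2⟩

lemma IsRelCocycle.map {c : List X → A} (hc : IsRelCocycle k S c) (f : A →+ B) :
    IsRelCocycle k S (f ∘ c) where
  coboundary_eq := hc.1.mono fun l hl => by simp_all [coboundary_comp]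
  eq_zero := hc.2.mono fun l hl => by simp_all

lemma IsRelCoboundary.congr {c c' : List X → A} (hc : IsRelCoboundary k S c)
    (h : c =ᶠ[smallNear (k + 1) univ] c') : IsRelCoboundary k S c' :=
  let ⟨b, hb, hcb⟩ := hc
  ⟨b, hb, h.symm.trans hcb⟩

lemma IsRelCoboundary.map {c : List X → A} (hc : IsRelCoboundary k S c) (f : A →+ B) :
    IsRelCoboundary k S (f ∘ c) := by
  obtain ⟨b, hb, hcb⟩ := hc
  refine ⟨f ∘ b, hb.mono fun l hl => by simp_all, hcb.mono fun l hl => ?_⟩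
  rw [coboundary_comp, Function.comp_apply, hl]

lemma IsRelCoboundary.add {c c' : List X → A} (hc : IsRelCoboundary k S c)
    (hc' : IsRelCoboundary k S c') : IsRelCoboundary k S (c + c') := by
  obtain ⟨b, hb, hcb⟩ := hc
  obtain ⟨b', hb', hcb'⟩ := hc'
  exact ⟨b + b', by simpa using hb.add hb', by simpa using hcb.add hcb'⟩

lemma IsRelCoboundary.sum {ι : Type*} (s : Finset ι) {c : ι → List X → A}
    (h : ∀ i ∈ s, IsRelCoboundary k S (c i)) : IsRelCoboundary k S (∑ i ∈ s, c i) := by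
  classical
  induction s using Finset.induction_on with
  | empty => exact ⟨0, .rfl, by simp⟩
  | insert i s hi ih =>
    rw [Finset.sum_insert hi]
    exact (h i (Finset.mem_insert_self _ _)).add
      (ih fun j hj => h j (Finset.mem_insert_of_mem hj))

/-! ### Chain maps close to the identity -/

/-- The chain map `P` moves the vertices of small simplices by less than `ρ`. -/
def MovesLessThan (ρ : ℝ) (P : Chain R X →ₗ[R] Chain R X) : Prop :=
  ∃ δ > 0, ∀ l, IsSmall δ l → P (single l 1) ∈ chainsOn R l.length {q | ∃ x ∈ l, dist q x < ρ}

section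

variable {E : Type*} [AddCommGroup E] [Module R E]

lemma IsAugmentedMap.exists_homotopy_near {P : Chain R X →ₗ[R] Chain R X} (hP : IsAugmentedMap P)
    {ρ : ℝ} (hρ : 0 < ρ) (hPρ : MovesLessThan ρ P) : ∃ H : Chain R X →ₗ[R] Chain R X,
      (∀ l, boundary (H (single l 1)) = single l 1 - P (single l 1) - H (boundary (single l 1))) ∧
      ∀ k S, ∀ᶠ l in smallNear k S,
        H (single l 1) ∈ chainsOn R (k + 1) {q | ∃ x ∈ l, dist q x < ρ} := by
  obtain ⟨δ, hδ, hPδ⟩ := hPρ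
  let Q (l : List X) : Set X := {q | IsSmall δ l → ∃ x ∈ l, dist q x < ρ}
  have hP_carried (l : List X) : P (single l 1) ∈ chainsOn R l.length (Q l) := by
    by_cases hl : IsSmall δ l
    · exact chainsOn_mono (fun q hq _ => hq) (hPδ l hl)
    · exact chainsOn_mono (fun q _ h => absurd h hl) (hP.mem l)
  obtain ⟨H, hH⟩ := hP.exists_chain_homotopy (Q := Q) (fun l x hx _ => ⟨x, hx, by simpa using hρ⟩)
    (fun l m hml q hq hl => (hq (hl.subset hml)).imp fun x hx => ⟨hml hx.1, hx.2⟩) hP_carried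
  refine ⟨H, fun l => (hH l).2, fun k S => eventually_smallNear.2 ⟨δ, hδ, fun l hlk hl _ => ?_⟩⟩
  subst hlk
  have hQ : Q l ⊆ {q | ∃ x ∈ l, dist q x < ρ} := fun q hq => hq hl
  exact chainsOn_mono hQ (hH l).1

theorem IsRelCocycle.exists_pos_isRelCoboundary_sub {c : List X → E} (hc : IsRelCocycle k S c) :
    ∃ ρ > 0, ∀ P : Chain R X →ₗ[R] Chain R X, IsAugmentedMap P → MovesLessThan ρ P →
      IsRelCoboundary k S fun l => c l - linearCombination R c (P (single l 1)) := by
  obtain ⟨ρ₁, hρ₁, h₁⟩ := exists_pos_eventually_forall hc.coboundary_eq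
  obtain ⟨ρ₂, hρ₂, h₂⟩ := exists_pos_eventually_forall hc.eq_zero
  refine ⟨min ρ₁ ρ₂, lt_min hρ₁ hρ₂, fun P hP hPρ => ?_⟩
  obtain ⟨H, hH, hHρ⟩ := hP.exists_homotopy_near (lt_min hρ₁ hρ₂) hPρ
  refine ⟨fun l => linearCombination R c (H (single l 1)), ?_, ?_⟩
  · filter_upwards [hHρ k S, h₂ k] with l hl hl₂
    refine map_eq_of_mem_supported (linearCombination R c) 0 (fun m hm => ?_) hl
    simpa using hl₂ m hm.1 fun q hq =>
      (hm.2 q hq).imp fun x hx => ⟨hx.1, hx.2.trans_le (min_le_right _ _)⟩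
  · filter_upwards [hHρ (k + 1) univ, h₁ (k + 1)] with l hl hl₁
    have hzero : linearCombination R (coboundary c) (H (single l 1)) = 0 :=
      map_eq_of_mem_supported (linearCombination R (coboundary c)) 0 (fun m hm => by
        simpa using hl₁ m hm.1 fun q hq =>
          (hm.2 q hq).imp fun x hx => ⟨hx.1, hx.2.trans_le (min_le_left _ _)⟩) hl
    rw [← linearCombination_boundary, hH] at hzero
    have hcob := map_boundary_single (linearCombination R c ∘ₗ H) l
    simp only [LinearMap.comp_apply] at hcob
    simpa [hcob, sub_eq_zero] using hzero

end

variable (X) in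
/-- The filter of the, possibly discontinuous, self-maps of `X` uniformly close to the identity. -/
def closeToId : Filter (X → X) := ⨅ ρ ∈ Ioi (0 : ℝ), 𝓟 {r | ∀ x, dist (r x) x < ρ}

lemma hasBasis_closeToId :
    (closeToId X).HasBasis (0 < ·) fun ρ => {r | ∀ x, dist (r x) x < ρ} :=
  hasBasis_iInf_pos_principal fun _ _ hρ _ hr x => (hr x).trans_le hρ

lemma eventually_map {p : List X → Prop} (hp : ∀ᶠ l in smallNear (k + 1) S, p l) :
    ∀ᶠ r in closeToId X, ∀ᶠ l in smallNear (k + 1) S, p (l.map r) := by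
  obtain ⟨ρ, hρ, hp⟩ := exists_pos_eventually_forall hp
  refine hasBasis_closeToId.eventually_iff.2 ⟨ρ, hρ, fun r hr => ?_⟩
  filter_upwards [hp (k + 1), eventually_length] with l hl hlk
  exact hl _ (by simp [hlk]) (List.forall_mem_map.2 fun x hx => ⟨x, hx, hr x⟩)

lemma IsRelCocycle.eventually_comp_map {c : List X → A} (hc : IsRelCocycle k S c) :
    ∀ᶠ r in closeToId X, IsRelCocycle k S (c ∘ List.map r) := by
  filter_upwards [eventually_map hc.1, eventually_map hc.2] with r hr hr'
  exact ⟨hr.mono fun l hl => (coboundary_comp_map r c l).trans hl, hr'⟩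

theorem IsRelCocycle.eventually_isRelCoboundary_sub {c : List X → A} (hc : IsRelCocycle k S c) :
    ∀ᶠ r in closeToId X, IsRelCoboundary k S (c - c ∘ List.map r) := by
  obtain ⟨ρ, hρ, h⟩ := hc.exists_pos_isRelCoboundary_sub (R := ℤ)
  refine hasBasis_closeToId.eventually_iff.2 ⟨ρ, hρ, fun r hr => ?_⟩
  have hclose : MovesLessThan ρ (lmapDomain ℤ ℤ (List.map r)) := ⟨1, one_pos, fun l _ => by
    simpa using single_mem_chainsOn (l := l.map r) (by simp)
      (List.forall_mem_map.2 (by exact fun x hx => ⟨x, hx, hr x⟩))⟩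
  simpa [Pi.sub_def] using h _ (isAugmentedMap_lmapDomain r) hclose

lemma frequently_finite_range [CompactSpace X] : ∃ᶠ r in closeToId X, (range r).Finite := by
  refine hasBasis_closeToId.frequently_iff.2 fun ρ hρ => ?_
  obtain ⟨t, -, ht, hcov⟩ := finite_cover_balls_of_compact (isCompact_univ (X := X)) hρ
  have hclose (x : X) : ∃ y ∈ t, dist y x < ρ := by
    simpa [dist_comm] using hcov (mem_univ x)
  choose r hrt hr using hclose
  exact ⟨r, hr, ht.subset (range_subset_iff.2 hrt)⟩

end Metric

lemma finite_setOf_length_eq {Q : Set X} (hQ : Q.Finite) (k : ℕ) :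
    {l : List X | l.length = k ∧ ∀ x ∈ l, x ∈ Q}.Finite := by
  have := hQ.to_subtype
  refine ((List.finite_length_eq Q k).image (List.map Subtype.val)).subset ?_
  rintro l ⟨hl, hx⟩
  lift l to List Q using hx
  exact ⟨l, by simpa using hl, rfl⟩

lemma finite_image_comp_map {α : Type*} {r : X → Y} (hr : (range r).Finite) (k : ℕ)
    (c : List Y → α) : ((c ∘ List.map r) '' {l | l.length = k}).Finite := by
  rw [image_comp]
  refine ((finite_setOf_length_eq hr k).subset ?_).image c
  rintro _ ⟨l, hl, rfl⟩
  exact ⟨by simpa using hl, List.forall_mem_map.2 fun x _ => mem_range_self x⟩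

theorem RelAcyclic.of_finite_range [PseudoMetricSpace X] [CompactSpace X] {A : Type*}
    [AddCommGroup A] {k : ℕ} {S : Set X} (h : ∀ c : List X → A, (range c).Finite →
      IsRelCocycle k S c → IsRelCoboundary k S c) : RelAcyclic A k S := by
  classical
  intro c hc
  obtain ⟨r, hfin, hr, hcr⟩ := (frequently_finite_range.and_eventually
    (hc.eventually_comp_map.and hc.eventually_isRelCoboundary_sub)).exists
  let c' : List X → A := fun l => if l.length = k + 1 then c (l.map r) else 0
  have htrunc : c ∘ List.map r =ᶠ[smallNear (k + 1) univ] c' := by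
    filter_upwards [eventually_length] with l hl using (if_pos hl).symm
  have hfin' : (range c').Finite :=
    ((finite_image_comp_map hfin (k + 1) c).insert 0).subset (range_subset_iff.2 fun l => by
      by_cases hl : l.length = k + 1
      · exact Or.inr ⟨l, hl, (if_pos hl).symm⟩
      · exact Or.inl (if_neg hl))
  simpa using hcr.add ((h _ hfin' (hr.congr htrunc)).congr htrunc.symm)

/-! ### Change of coefficients -/

section Exact

variable {A B C : Type*} [AddCommGroup A] [AddCommGroup B] [AddCommGroup C] {f : A →+ B}
  {g : B →+ C}

lemma exists_rightInverse_map_zero (hg : Surjective g) : ∃ s : C → B, s 0 = 0 ∧ ∀ x, g (s x) = x :=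
  ⟨fun x => surjInv hg x - surjInv hg 0, sub_self _, fun x => by simp [surjInv_eq hg]⟩

lemma exists_comp_eventuallyEq (hfg : Exact f g) {α : Type*} {F : Filter α} {b : α → B}
    (hb : g ∘ b =ᶠ[F] 0) : ∃ a : α → A, f ∘ a =ᶠ[F] b :=
  ⟨invFun f ∘ b, hb.mono fun _ hl => invFun_eq ((hfg _).1 hl)⟩

variable [PseudoMetricSpace X] {k : ℕ} {S : Set X}

lemma IsRelCocycle.of_map_injective (hf : Injective f) {c : List X → A}
    (hc : IsRelCocycle k S (f ∘ c)) : IsRelCocycle k S c where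
  coboundary_eq := hc.1.mono fun l hl => hf (by simpa [coboundary_comp] using hl)
  eq_zero := hc.2.mono fun l hl => hf (by simpa using hl)

/-- The part `H^k(B) → H^k(C) → H^{k+1}(A)` of the long exact sequence of coefficients. -/
theorem RelAcyclic.of_exact (hf : Injective f) (hfg : Exact f g) (hg : Surjective g)
    (hB : RelAcyclic B k S) (hA : RelAcyclic A (k + 1) S) : RelAcyclic C k S := by
  intro c hc
  obtain ⟨s, hs₀, hs⟩ := exists_rightInverse_map_zero hg
  have hgs : g ∘ s ∘ c = c := funext fun l => hs (c l)
  have hsc : s ∘ c =ᶠ[smallNear (k + 1) S] 0 := hc.2.mono fun l hl => by simp [hl, hs₀]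
  have hcob : g ∘ coboundary (s ∘ c) = coboundary c :=
    funext fun l => by rw [Function.comp_apply, ← coboundary_comp, hgs]
  obtain ⟨a, ha⟩ := exists_comp_eventuallyEq hfg (hcob ▸ hc.1)
  have ha_cocycle : IsRelCocycle (k + 1) S (f ∘ a) := IsRelCocycle.congr
    ⟨by rw [coboundary_coboundary], coboundary_eventuallyEq_zero hsc⟩ ha.symm
  obtain ⟨b, hb, hab⟩ := hA a (.of_map_injective hf ha_cocycle)
  have hcocycle : IsRelCocycle k S (s ∘ c - f ∘ b) := by
    refine ⟨?_, ?_⟩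
    · filter_upwards [ha, hab] with l hl hl'
      simp [coboundary_comp, ← hl, hl']
    · filter_upwards [hsc, hb] with l hl hl'
      simp_all
  convert (hB _ hcocycle).map g using 1
  funext l
  simp [hs, hfg.apply_apply_eq_zero]

/-- The part `H^{k-1}(C) → H^k(A) → H^k(B)` of the long exact sequence of coefficients. -/
theorem IsRelCoboundary.of_map_of_exact (hf : Injective f) (hfg : Exact f g) (hg : Surjective g)
    (hC : RelAcyclic C (k + 1) S) {c : List X → A} (hc : IsRelCoboundary (k + 2) S (f ∘ c)) :
    IsRelCoboundary (k + 2) S c := by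
  obtain ⟨b, hb, hcb⟩ := hc
  obtain ⟨s, hs₀, hs⟩ := exists_rightInverse_map_zero hg
  have hgb : IsRelCocycle (k + 1) S (g ∘ b) := by
    refine ⟨hcb.mono fun l hl => ?_, hb.mono fun l hl => by simp_all⟩
    rw [coboundary_comp, ← hl]
    simp [hfg.apply_apply_eq_zero]
  obtain ⟨e, he, hbe⟩ := hC _ hgb
  have hse : coboundary (s ∘ e) =ᶠ[smallNear (k + 2) S] 0 :=
    coboundary_eventuallyEq_zero (he.mono fun l hl => by simp [hl, hs₀])
  obtain ⟨a, ha⟩ := exists_comp_eventuallyEq (b := b - coboundary (s ∘ e)) hfg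
    (hbe.mono fun l hl => by
      have hgs : g ∘ s ∘ e = e := funext fun l => hs (e l)
      simp_all [← coboundary_comp])
  refine ⟨a, ?_, ?_⟩
  · filter_upwards [ha.filter_mono (smallNear_mono (subset_univ S)), hb, hse] with l hl hl₁ hl₂
    exact hf (by simp_all)
  · filter_upwards [coboundary_eventuallyEq ha, hcb] with l hl hl'
    refine hf ?_
    simp_all [coboundary_comp]

end Exact

section Coefficients

variable [PseudoMetricSpace X] {k : ℕ} {S : Set X}

/-- Cohomology with coefficients in a vector space is a sum of copies of that of the field. -/
theorem RelAcyclic.of_module [CompactSpace X] {K V : Type*} [Field K] [AddCommGroup V] [Module K V]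
    (h : RelAcyclic K k S) : RelAcyclic V k S := by
  refine .of_finite_range fun c hfin hc => ?_
  let W : Submodule K V := Submodule.span K (range c)
  have : Module.Finite K W := FiniteDimensional.span_of_finite K hfin
  let B := Module.finBasis K W
  let w : List X → W := fun l => ⟨c l, Submodule.subset_span ⟨l, rfl⟩⟩
  have hw : IsRelCocycle k S w :=
    IsRelCocycle.of_map_injective (f := W.subtype.toAddMonoidHom) Subtype.val_injective hc
  have hsum : c = ∑ i, (fun a : K => a • (B i : V)) ∘ B.coord i ∘ w := by
    funext l
    rw [Finset.sum_apply]
    exact (congrArg W.subtype (B.sum_repr (w l))).symm.trans (map_sum W.subtype _ _)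
  rw [hsum]
  exact .sum _ fun i _ => (h _ (hw.map (B.coord i).toAddMonoidHom)).map
    (LinearMap.toSpanSingleton K V (B i)).toAddMonoidHom

lemma exact_mulLeft_intCast (p : ℕ) :
    Exact (AddMonoidHom.mulLeft (p : ℤ)) (Int.castAddHom (ZMod p)) := fun a => by
  simp [ZMod.intCast_zmod_eq_zero_iff_dvd, dvd_def, eq_comm]

lemma mulLeft_natCast_injective {p : ℕ} (hp : p ≠ 0) :
    Injective (AddMonoidHom.mulLeft (p : ℤ)) :=
  mul_right_injective₀ (Nat.cast_ne_zero.2 hp)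

theorem RelAcyclic.zmod {p : ℕ} (hp : p ≠ 0) (h : RelAcyclic ℤ k S)
    (h' : RelAcyclic ℤ (k + 1) S) : RelAcyclic (ZMod p) k S :=
  .of_exact (mulLeft_natCast_injective hp) (exact_mulLeft_intCast p) ZMod.intCast_surjective h h'

lemma IsRelCoboundary.of_nsmul (hp : ∀ p : ℕ, p.Prime → RelAcyclic (ZMod p) (k + 1) S) {N : ℕ}
    (hN : N ≠ 0) {c : List X → ℤ} (hc : IsRelCoboundary (k + 2) S (N • c)) :
    IsRelCoboundary (k + 2) S c := by
  induction N using induction_on_primes with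
  | zero => exact absurd rfl hN
  | one => simpa using hc
  | prime_mul p M hpp ih =>
    refine ih (right_ne_zero_of_mul hN) (.of_map_of_exact (mulLeft_natCast_injective hpp.ne_zero)
      (exact_mulLeft_intCast p) ZMod.intCast_surjective (hp p hpp) ?_)
    convert hc using 1
    funext l
    simp [mul_assoc]

lemma exists_common_denominator {s : Set ℚ} (hs : s.Finite) :
    ∃ N : ℕ, N ≠ 0 ∧ ∀ q ∈ s, ∃ z : ℤ, (z : ℚ) = N * q := by
  refine ⟨∏ q ∈ hs.toFinset, q.den, Finset.prod_ne_zero_iff.2 fun q _ => q.den_nz, fun q hq => ?_⟩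
  obtain ⟨m, hm⟩ := Finset.dvd_prod_of_mem Rat.den (hs.mem_toFinset.2 hq)
  refine ⟨m * q.num, ?_⟩
  rw [hm]
  push_cast
  rw [← Rat.mul_den_eq_num q]
  ring

theorem RelAcyclic.rat [CompactSpace X] (h : RelAcyclic ℤ k S) : RelAcyclic ℚ k S := by
  refine .of_finite_range fun c hfin hc => ?_
  obtain ⟨N, hN, hNc⟩ := exists_common_denominator hfin
  choose z hz using fun l => hNc (c l) (mem_range_self l)
  have hz' : Int.castAddHom ℚ ∘ z = AddMonoidHom.mulLeft (N : ℚ) ∘ c := funext hz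
  have hz_cocycle : IsRelCocycle k S z :=
    .of_map_injective (f := Int.castAddHom ℚ) Int.cast_injective (hz' ▸ hc.map _)
  convert ((h z hz_cocycle).map (Int.castAddHom ℚ)).map (AddMonoidHom.mulLeft (N : ℚ)⁻¹) using 1
  funext l
  simp [hz, hN]

lemma exists_isRelCoboundary_nsmul {c : List X → ℤ} {b : List X → ℚ}
    (hfin : (b '' {l | l.length = k + 1}).Finite) (hb : b =ᶠ[smallNear (k + 1) S] 0)
    (hcb : Int.castAddHom ℚ ∘ c =ᶠ[smallNear (k + 2) univ] coboundary b) :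
    ∃ N : ℕ, N ≠ 0 ∧ IsRelCoboundary (k + 1) S (N • c) := by
  obtain ⟨N, hN, hNb⟩ := exists_common_denominator hfin
  choose! z hz using fun l (hl : l.length = k + 1) => hNb (b l) (mem_image_of_mem b (by exact hl))
  have hz' : Int.castAddHom ℚ ∘ z =ᶠ[smallNear (k + 1) univ] AddMonoidHom.mulLeft (N : ℚ) ∘ b :=
    eventually_length.mono hz
  refine ⟨N, hN, z, ?_, ?_⟩
  · filter_upwards [hz'.filter_mono (smallNear_mono (subset_univ S)), hb] with l hl hl'
    simpa [hl'] using hl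
  · filter_upwards [coboundary_eventuallyEq hz', hcb] with l hl hl'
    rw [coboundary_comp, coboundary_comp, ← hl'] at hl
    simpa using (Int.cast_injective (α := ℚ) (by simpa using hl)).symm

/-- A class which is trivial over `ℚ` is torsion, and there is no torsion by assumption. -/
theorem RelAcyclic.int [CompactSpace X] (hp : ∀ p : ℕ, p.Prime → RelAcyclic (ZMod p) (k + 1) S)
    (h : RelAcyclic ℚ (k + 2) S) : RelAcyclic ℤ (k + 2) S := by
  intro c hc
  obtain ⟨b, hb, hcb⟩ := h _ (hc.map (Int.castAddHom ℚ))
  obtain ⟨r, hfin, hcr, hbr, hcbr⟩ := (frequently_finite_range.and_eventually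
    (hc.eventually_isRelCoboundary_sub.and ((eventually_map hb).and (eventually_map hcb)))).exists
  obtain ⟨N, hN, hNc⟩ := exists_isRelCoboundary_nsmul (c := c ∘ List.map r)
    (finite_image_comp_map hfin (k + 2) b) hbr
    (hcbr.mono fun l hl => hl.trans (coboundary_comp_map r b l).symm)
  simpa using hcr.add (IsRelCoboundary.of_nsmul hp hN hNc)

end Coefficients

/-! ### Retraction onto the simplices of a finite ordered set -/

section Sorted

variable [LinearOrder X]

/-- The simplices with vertices in `V`, each written as a strictly increasing list. -/
def orderedSimplices (V : Set X) : Set (List X) := {m | m.Pairwise (· < ·) ∧ ∀ x ∈ m, x ∈ V}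

lemma orderedSimplices_mono {V V' : Set X} (h : V ⊆ V') :
    orderedSimplices V ⊆ orderedSimplices V' :=
  fun _ hm => ⟨hm.1, fun x hx => h (hm.2 x hx)⟩

lemma sublist_mem_orderedSimplices {V : Set X} {m m' : List X} (hm : m ∈ orderedSimplices V)
    (h : m'.Sublist m) : m' ∈ orderedSimplices V :=
  ⟨hm.1.sublist h, fun x hx => hm.2 x (h.subset hx)⟩

lemma finite_orderedSimplices {V : Set X} (hV : V.Finite) : (orderedSimplices V).Finite := by
  classical
  have := hV.fintype
  refine (finite_range fun l : {l : List V // l.Nodup} => l.1.map Subtype.val).subset ?_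
  rintro l ⟨hl, hx⟩
  lift l to List V using hx
  exact ⟨⟨l, List.Nodup.of_map Subtype.val (hl.imp fun h => h.ne)⟩, rfl⟩

/-- The cone over the least vertex `v`, in which the simplices that contain `v` degenerate. -/
def orderedCone (v : X) : Chain R X →ₗ[R] Chain R X :=
  linearCombination R fun l => if l.head? = some v then 0 else single (v :: l) 1

lemma orderedCone_cone (v : X) (z : Chain R X) : orderedCone v (cone v z) = 0 :=
  map_eq_of_single (orderedCone v ∘ₗ cone v) 0 (fun l => by simp [orderedCone]) z

lemma orderedCone_eq_cone {v : X} {z : Chain R X} (hz : z ∈ supported R R {l | v ∉ l}) :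
    orderedCone v z = cone v z :=
  map_eq_of_mem_supported _ _ (fun l hl => by
    have : l.head? ≠ some v := fun h => hl (List.mem_of_head? h)
    simp [orderedCone, this]) hz

lemma boundary_orderedCone {v : X} {l : List X} (hl : l.Pairwise (· < ·)) (hv : ∀ x ∈ l, v ≤ x) :
    boundary (orderedCone v (single l (1 : R))) =
      single l 1 - orderedCone v (boundary (single l 1)) := by
  by_cases h : v ∈ l
  · obtain ⟨t, rfl⟩ : ∃ t, l = v :: t := by
      obtain _ | ⟨y, t⟩ := l
      · simp at h
      · obtain rfl | h := List.mem_cons.1 h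
        · exact ⟨t, rfl⟩
        · exact absurd ((List.pairwise_cons.1 hl).1 v h) (hv y (by simp)).not_gt
    have ht : v ∉ t := fun h => lt_irrefl v ((List.pairwise_cons.1 hl).1 v h)
    rw [boundary_single_cons, map_sub, orderedCone_cone, orderedCone_eq_cone (single_mem ht),
      ← cone_single, orderedCone_cone]
    simp
  · have hb : boundary (single l (1 : R)) ∈ supported R R {m | v ∉ m} :=
      Finsupp.supported_mono (fun m hm => mt (fun hvm => hm.1.subset hvm) h) (boundary_single_mem l)
    rw [orderedCone_eq_cone hb, orderedCone_eq_cone (single_mem h), boundary_cone]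

variable (R) in
/-- The chains on increasing simplices of length `k` with vertices in `V`. -/
def orderedChainsOn (k : ℕ) (V : Set X) : Submodule R (Chain R X) :=
  supported R R {m | m.length = k ∧ m ∈ orderedSimplices V}

lemma orderedCone_mem {k : ℕ} {V : Set X} {v : X} (hv : v ∈ V) (hv_le : ∀ x ∈ V, v ≤ x)
    {z : Chain R X} (hz : z ∈ orderedChainsOn R k V) :
    orderedCone v z ∈ orderedChainsOn R (k + 1) V := by
  refine map_mem_of_mem_supported _ (fun m hm => ?_) hz
  obtain ⟨hmk, hm, hmV⟩ := hm
  by_cases h : m.head? = some v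
  · simp [orderedCone, h]
  · have hlt : ∀ y ∈ m, v < y := by
      obtain _ | ⟨x, t⟩ := m
      · simp
      · obtain ⟨hxV, -⟩ := List.forall_mem_cons.1 hmV
        have hvx : v < x := (hv_le x hxV).lt_of_ne fun hvx => h (by simp [hvx])
        exact List.forall_mem_cons.2
          ⟨hvx, fun y hy => hvx.trans ((List.pairwise_cons.1 hm).1 y hy)⟩
    rw [orderedCone, Finsupp.linearCombination_single, if_neg h, one_smul]
    exact single_mem (by exact ⟨by simp [hmk], List.pairwise_cons.2 ⟨hlt, hm⟩,
      List.forall_mem_cons.2 ⟨hv, hmV⟩⟩)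

lemma exists_boundary_eq_orderedChainsOn {k : ℕ} {V : Set X} (hV : V.Finite) (hne : V.Nonempty)
    {z : Chain R X} (hz : z ∈ orderedChainsOn R k V) (hb : boundary z = 0) :
    ∃ w ∈ orderedChainsOn R (k + 1) V, boundary w = z := by
  obtain ⟨v, hv, hv_le⟩ := exists_min_image V id hV hne
  refine ⟨orderedCone v z, orderedCone_mem hv hv_le hz, ?_⟩
  have := map_eq_of_mem_supported (boundary ∘ₗ orderedCone v)
    (LinearMap.id - orderedCone v ∘ₗ boundary)
    (fun m hm => boundary_orderedCone hm.2.1 fun x hx => hv_le x (hm.2.2 x hx)) hz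
  simpa [hb] using this

theorem exists_isAugmentedMap_orderedSimplices (r : X → X) :
    ∃ P : Chain R X →ₗ[R] Chain R X, IsAugmentedMap P ∧
      ∀ l, P (single l 1) ∈ supported R R (orderedSimplices (r '' {x | x ∈ l})) := by
  let V (l : List X) : Set X := r '' {x | x ∈ l}
  obtain ⟨P, hP⟩ := exists_carried_map (R := R) List.length boundary_boundary boundary univ
    (fun l => orderedChainsOn R (l.length - 1) (V l)) (fun l => orderedChainsOn R l.length (V l))
    0 1
    (fun l _ => by
      refine Finsupp.supported_mono (fun m hm => ?_) (boundary_single_mem l)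
      refine ⟨trivial, by grind, ?_⟩
      rw [← hm.2]
      exact Finsupp.supported_mono fun t ht =>
        ⟨ht.1, orderedSimplices_mono (image_mono hm.1.subset) ht.2⟩)
    (fun l _ _ => by simp) (fun l _ => by simp)
    (fun l _ hl z hz hd => by
      obtain ⟨x, hx⟩ := List.exists_mem_of_length_pos hl
      rw [← Nat.sub_add_cancel hl]
      exact exists_boundary_eq_orderedChainsOn (l.finite_toSet.image r) ⟨r x, x, hx, rfl⟩ hz hd)
    (fun _ => single [] 1)
    (fun l _ hl => ⟨single_mem (by simp [hl, orderedSimplices]), by simp⟩)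
  refine ⟨P, ⟨map_eq_of_single (boundary ∘ₗ P) (P ∘ₗ boundary) fun l => ?_, ?_, fun l => ?_⟩,
    fun l => ?_⟩
  · simpa using (hP l trivial).2.1
  · exact (hP [] trivial).2.2 rfl
  · exact Finsupp.supported_mono (fun m hm => by exact ⟨hm.1, by simp⟩) (hP l trivial).1
  · exact Finsupp.supported_mono (fun m hm => hm.2) (hP l trivial).1

end Sorted

/-! ### Reduction of dimension -/

section Reduction

variable [PseudoMetricSpace X] {K : Set (List X)} {ρ : ℝ} {n j : ℕ}
  {P : Chain R X →ₗ[R] Chain R X}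

/-- The points at distance less than `ρ` from every vertex of `m`. -/
def interBalls (ρ : ℝ) (m : List X) : Set X := {x | ∀ y ∈ m, dist x y < ρ}

lemma isOpen_interBalls (ρ : ℝ) (m : List X) : IsOpen (interBalls ρ m) := by
  have h : interBalls ρ m = ⋂ y ∈ {y | y ∈ m}, Metric.ball y ρ := by
    ext x
    simp [interBalls]
  exact h ▸ m.finite_toSet.isOpen_biInter fun _ _ => Metric.isOpen_ball

lemma interBalls_anti {m m' : List X} (h : m ⊆ m') : interBalls ρ m' ⊆ interBalls ρ m :=
  fun _ hx y hy => hx y (h hy)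

lemma eventually_mem_interBalls {k : ℕ} {m : List X} {p : List X → Prop}
    (hp : ∀ᶠ l in smallNear k (interBalls ρ m)ᶜ, p l) :
    ∀ᶠ l in smallNear k univ, ¬ p l → ∀ x ∈ l, x ∈ interBalls ρ m := by
  obtain ⟨δ, hδ, hp⟩ := eventually_smallNear.1 hp
  refine eventually_smallNear.2 ⟨δ, hδ, fun l hlk hl _ hpl x hx => ?_⟩
  by_contra hxm
  exact hpl (hp l hlk hl ⟨x, hx, x, hxm, by simpa using hδ⟩)

variable (K ρ) in
/-- The linear map `f`, with values in chains on the simplicial complex `K`, takes small simplices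
to linear combinations of simplices at distance less than `ρ`. -/
structure IsNearIdOn (f : Chain R X →ₗ[R] Chain R X) : Prop where
  mem : ∀ l, f (single l 1) ∈ supported R R K
  eventually_eq_zero : ∀ m k, ∀ᶠ l in smallNear k (interBalls ρ m)ᶜ, f (single l 1) m = 0

lemma IsNearIdOn.sub {f g : Chain R X →ₗ[R] Chain R X} (hf : IsNearIdOn K ρ f)
    (hg : IsNearIdOn K ρ g) : IsNearIdOn K ρ (f - g) where
  mem l := Submodule.sub_mem _ (hf.mem l) (hg.mem l)
  eventually_eq_zero m k := by
    filter_upwards [hf.2 m k, hg.2 m k] with l hl hl'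
    simp [hl, hl']

lemma IsNearIdOn.boundary_comp (hK : K.Finite) (hsub : ∀ m ∈ K, ∀ m', m'.Sublist m → m' ∈ K)
    {f : Chain R X →ₗ[R] Chain R X} (hf : IsNearIdOn K ρ f) : IsNearIdOn K ρ (boundary ∘ₗ f) where
  mem l := map_mem_of_mem_supported boundary (fun m hm =>
    Finsupp.supported_mono (fun m' hm' => hsub m hm m' hm'.1) (boundary_single_mem m)) (hf.mem l)
  eventually_eq_zero m k := by
    have h : ∀ᶠ l in smallNear k (interBalls ρ m)ᶜ, ∀ m' ∈ K, m ⊆ m' → f (single l 1) m' = 0 :=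
      hK.eventually_all.2 fun m' _ => eventually_imp_distrib_left.2 fun hm =>
        (hf.2 m' k).filter_mono (smallNear_mono (compl_subset_compl.2 (interBalls_anti hm)))
    filter_upwards [h] with l hl
    have hsupp : f (single l 1) ∈ supported R R {m' | ¬ m ⊆ m'} := fun m' hm' hmm' =>
      Finsupp.mem_support_iff.1 hm' (hl m' (hf.mem l hm') hmm')
    refine map_eq_of_mem_supported (Finsupp.lapply m ∘ₗ boundary) 0 (fun m' hm' => ?_) hsupp
    by_contra hne
    exact hm' (boundary_single_mem m' (Finsupp.mem_support_iff.2 hne)).1.subset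

lemma IsNearIdOn.comp_boundary {f : Chain R X →ₗ[R] Chain R X} (hf : IsNearIdOn K ρ f)
    (hf_nil : f (single [] 1) = 0) : IsNearIdOn K ρ (f ∘ₗ boundary) where
  mem l := map_mem_of_mem_supported f (fun m _ => hf.mem m) (boundary_single_mem l)
  eventually_eq_zero m k := by
    obtain _ | _ | k := k
    · filter_upwards [eventually_length] with l hl
      simp [List.eq_nil_of_length_eq_zero hl]
    · filter_upwards [eventually_length] with l hl
      obtain ⟨x, rfl⟩ := List.length_eq_one_iff.1 hl
      simp [boundary_single_cons, hf_nil]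
    · filter_upwards [coboundary_eventuallyEq_zero (hf.2 m (k + 1))] with l hl
      exact (map_boundary_single (Finsupp.lapply m ∘ₗ f) l).trans hl

/-- A chain map to the complex `K`, close to the identity, which kills the small simplices of
dimension greater than `n`. -/
structure IsReduction (K : Set (List X)) (ρ : ℝ) (n : ℕ) (P : Chain R X →ₗ[R] Chain R X) : Prop
    extends IsAugmentedMap P where
  isNearIdOn : IsNearIdOn K ρ P
  eventually_eq_zero : ∀ k ≥ n, ∀ᶠ l in smallNear (k + 2) univ, P (single l 1) = 0

lemma IsReduction.exists_primitive (hK : K.Finite) (hP : IsReduction K ρ (j + 1) P)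
    (h : ∀ S : Set X, IsClosed S → RelAcyclic R (j + 1) S) :
    ∃ b : List X → List X → R, (∀ m, b m =ᶠ[smallNear (j + 1) (interBalls ρ m)ᶜ] 0) ∧
      ∀ᶠ l in smallNear (j + 2) univ, ∀ m ∈ K, P (single l 1) m = coboundary (b m) l := by
  have hcocycle (m : List X) :
      IsRelCocycle (j + 1) (interBalls ρ m)ᶜ fun l => P (single l 1) m := by
    refine ⟨?_, hP.isNearIdOn.2 m (j + 2)⟩
    filter_upwards [hP.eventually_eq_zero (j + 1) le_rfl] with l hl
    have := map_boundary_single (Finsupp.lapply m ∘ₗ P) l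
    simpa [← hP.comm, hl] using this.symm
  choose b hb hPb using fun m => h _ (isOpen_interBalls ρ m).isClosed_compl _ (hcocycle m)
  exact ⟨b, hb, hK.eventually_all.2 fun m _ => hPb m⟩

lemma IsReduction.exists_homotopy (hK : K.Finite) (hP : IsReduction K ρ (j + 1) P)
    (h : ∀ S : Set X, IsClosed S → RelAcyclic R (j + 1) S) :
    ∃ H : Chain R X →ₗ[R] Chain R X, IsNearIdOn K ρ H ∧
      (∀ l, H (single l 1) ∈ chainsOn R (l.length + 1) univ) ∧
      (∀ l, l.length ≠ j + 1 → H (single l 1) = 0) ∧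
      ∀ᶠ l in smallNear (j + 2) univ, P (single l 1) = H (boundary (single l 1)) := by
  classical
  obtain ⟨b, hb, hPb⟩ := hP.exists_primitive hK h
  have hK' := hK.subset (sep_subset K fun m => m.length = j + 2)
  let H : Chain R X →ₗ[R] Chain R X := linearCombination R fun l =>
    if l.length = j + 1 then Finsupp.indicator hK'.toFinset fun m _ => b m l else 0
  have hH (l m : List X) : H (single l 1) m =
      if l.length = j + 1 ∧ m ∈ K ∧ m.length = j + 2 then b m l else 0 := by
    by_cases hl : l.length = j + 1 <;> simp [H, hl, Finsupp.indicator_apply]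
  have hH_mem (l m : List X) (hm : m ∈ (H (single l 1)).support) :
      l.length = j + 1 ∧ m ∈ K ∧ m.length = j + 2 := by
    by_contra hne
    exact Finsupp.mem_support_iff.1 hm ((hH l m).trans (if_neg hne))
  refine ⟨H, ⟨fun l m hm => (hH_mem l m hm).2.1, fun m k => ?_⟩, fun l m hm => ?_, fun l hl => ?_,
    ?_⟩
  · by_cases hk : k = j + 1
    · subst hk
      filter_upwards [hb m] with l hl
      simp [hH, hl]
    · filter_upwards [eventually_length] with l hl
      simp [hH, hl, hk]
  · have := hH_mem l m hm
    exact ⟨by omega, fun _ _ => trivial⟩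
  · simp [H, hl]
  · filter_upwards [hPb, eventually_length] with l hl hlj
    ext m
    have hHm := map_boundary_single (Finsupp.lapply m ∘ₗ H) l
    simp only [LinearMap.comp_apply, Finsupp.lapply_apply] at hHm
    rw [hHm]
    by_cases hm : m ∈ K ∧ m.length = j + 2
    · rw [hl m hm.1]
      refine coboundary_congr fun l' _ hl' => ?_
      rw [hH, if_pos ⟨by omega, hm⟩]
    · rw [coboundary_eq_zero fun l' _ _ => (hH l' m).trans (if_neg fun h => hm h.2)]
      by_contra hne
      have hPm := Finsupp.mem_support_iff.2 hne
      exact hm ⟨hP.isNearIdOn.mem l hPm, by rw [(hP.mem l hPm).1, hlj]⟩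

lemma IsReduction.exists_pred (hK : K.Finite) (hsub : ∀ m ∈ K, ∀ m', m'.Sublist m → m' ∈ K)
    (hP : IsReduction K ρ (j + 1) P) (h : ∀ S : Set X, IsClosed S → RelAcyclic R (j + 1) S) :
    ∃ P' : Chain R X →ₗ[R] Chain R X, IsReduction K ρ j P' := by
  obtain ⟨H, hHK, hH_mem, hH_zero, hPH⟩ := hP.exists_homotopy hK h
  have hH_nil : H (single [] 1) = 0 := hH_zero [] (by simp)
  refine ⟨P - H ∘ₗ boundary - boundary ∘ₗ H, ⟨fun z => by simp [hP.comm], by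
    simp [hP.map_nil, hH_nil], fun l => ?_⟩, ?_, fun k hk => ?_⟩
  · refine Submodule.sub_mem _ (Submodule.sub_mem _ (hP.mem l) ?_)
      (boundary_mem_chainsOn (hH_mem l))
    exact map_mem_of_mem_supported H (fun m hm => by rw [← hm.2]; exact hH_mem m)
      (boundary_single_mem l)
  · exact (hP.isNearIdOn.sub (hHK.comp_boundary hH_nil)).sub (hHK.boundary_comp hK hsub)
  · obtain rfl | hk := hk.eq_or_lt
    · filter_upwards [hPH, eventually_length] with l hl hlj
      simp [hl, hH_zero l (by omega)]
    · filter_upwards [hP.eventually_eq_zero k hk, eventually_length] with l hl hlk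
      have hzero : H (boundary (single l 1)) = 0 :=
        map_eq_of_mem_supported H 0 (fun m hm => hH_zero m (by have := hm.2; omega))
          (boundary_single_mem l)
      simp [hl, hH_zero l (by omega), hzero]

lemma IsReduction.exists_of_relAcyclic (hK : K.Finite)
    (hsub : ∀ m ∈ K, ∀ m', m'.Sublist m → m' ∈ K)
    (h : ∀ k > n, ∀ S : Set X, IsClosed S → RelAcyclic R k S) (d : ℕ)
    (hP : IsReduction K ρ (n + d) P) : ∃ P' : Chain R X →ₗ[R] Chain R X, IsReduction K ρ n P' := by
  induction d generalizing P with
  | zero => exact ⟨P, hP⟩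
  | succ d ih =>
    obtain ⟨P', hP'⟩ := hP.exists_pred hK hsub (h (n + d + 1) (by omega))
    exact ih hP'

lemma exists_isNearIdOn [CompactSpace X] (hρ : 0 < ρ) : ∃ K : Set (List X), K.Finite ∧
    (∀ m ∈ K, ∀ m', m'.Sublist m → m' ∈ K) ∧
    ∃ P : Chain R X →ₗ[R] Chain R X, IsAugmentedMap P ∧ IsNearIdOn K ρ P := by
  let _ : LinearOrder X := IsWellOrder.linearOrder WellOrderingRel
  obtain ⟨r, hfin, hr⟩ := (frequently_finite_range.and_eventually
    ((hasBasis_closeToId (X := X)).mem_of_mem (half_pos hρ))).exists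
  obtain ⟨P, hP, hPr⟩ := exists_isAugmentedMap_orderedSimplices (R := R) r
  refine ⟨orderedSimplices (range r), finite_orderedSimplices hfin,
    fun m hm m' => sublist_mem_orderedSimplices hm, P, hP,
    fun l => Finsupp.supported_mono (orderedSimplices_mono (image_subset_range _ _)) (hPr l),
    fun m k => eventually_smallNear.2 ⟨ρ / 4, by positivity, fun l _ hl hnear => ?_⟩⟩
  obtain ⟨x, hx, a, ha, hxa⟩ := hnear
  by_contra hne
  refine ha fun y hy => ?_
  obtain ⟨x', hx', rfl⟩ := (hPr l (Finsupp.mem_support_iff.2 hne)).2 y hy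
  have hr' := hr x'
  rw [dist_comm] at hxa hr'
  linarith [dist_triangle4 a x x' (r x'), hl x hx x' hx']

lemma exists_pos_forall_isSmall {p : List X → Prop} (hp_nil : p [])
    (hp : ∀ k, ∀ᶠ l in smallNear (k + 1) univ, p l) {N : ℕ} (hN : ∀ l, N < l.length → p l) :
    ∃ δ > 0, ∀ l, IsSmall δ l → p l := by
  have h (k : ℕ) : ∀ᶠ δ in 𝓝[>] (0 : ℝ), ∀ l : List X, l.length = k + 1 → IsSmall δ l → p l := by
    obtain ⟨δ, hδ, h⟩ := eventually_smallNear_univ.1 (hp k)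
    filter_upwards [Ioo_mem_nhdsGT hδ] with ε hε l hl hs using h l hl (hs.mono hε.2.le)
  obtain ⟨δ, hδp, hδ⟩ :=
    (((finite_Iio N).eventually_all.2 fun k _ => h k).and self_mem_nhdsWithin).exists
  refine ⟨δ, hδ, fun l hl => ?_⟩
  obtain _ | ⟨x, l⟩ := l
  · exact hp_nil
  · by_cases hlN : l.length < N
    · exact hδp _ hlN _ rfl hl
    · exact hN _ (by grind)

theorem exists_dimension_reduction [CompactSpace X]
    (h : ∀ k > n, ∀ S : Set X, IsClosed S → RelAcyclic R k S) (hρ : 0 < ρ) :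
    ∃ P : Chain R X →ₗ[R] Chain R X, IsAugmentedMap P ∧ MovesLessThan ρ P ∧
      ∃ δ > 0, ∀ l, IsSmall δ l → n + 1 < l.length → P (single l 1) = 0 := by
  obtain ⟨K, hK, hsub, P₀, hP₀, hP₀K⟩ := exists_isNearIdOn (R := R) (X := X) hρ
  obtain ⟨N, hN⟩ := (hK.image List.length).bddAbove
  have hzero {P : Chain R X →ₗ[R] Chain R X} (hP : IsAugmentedMap P) (hPK : IsNearIdOn K ρ P)
      (l : List X) (hl : N < l.length) : P (single l 1) = 0 := by
    by_contra hne
    obtain ⟨m, hm⟩ := Finsupp.support_nonempty_iff.2 hne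
    have := hN (mem_image_of_mem List.length (hPK.mem l hm))
    have := (hP.mem l hm).1
    omega
  obtain ⟨P, hP⟩ := IsReduction.exists_of_relAcyclic hK hsub h N (P := P₀) ⟨hP₀, hP₀K,
    fun k hk => eventually_length.mono fun l hl => hzero hP₀ hP₀K l (by omega)⟩
  refine ⟨P, hP.toIsAugmentedMap, ?_, ?_⟩
  · refine exists_pos_forall_isSmall (N := N) (by simp [hP.map_nil, single_mem_chainsOn])
      (fun k => ?_) (fun l hl => by simp [hzero hP.toIsAugmentedMap hP.isNearIdOn l hl])
    filter_upwards [hK.eventually_all.2 fun m _ =>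
      eventually_mem_interBalls (hP.isNearIdOn.2 m (k + 1)), eventually_length] with l hl hlk
    obtain ⟨x, hx⟩ := List.exists_mem_of_length_pos (l := l) (by omega)
    exact fun m hm => ⟨(hP.mem l hm).1, fun y hy => ⟨x, hx, by
      simpa [dist_comm] using
        hl m (hP.isNearIdOn.mem l hm) (Finsupp.mem_support_iff.1 hm) x hx y hy⟩⟩
  · refine exists_pos_forall_isSmall (N := N) (by simp) (fun k => ?_)
      (fun l hl _ => hzero hP.toIsAugmentedMap hP.isNearIdOn l hl)
    by_cases hk : n < k
    · obtain ⟨k, rfl⟩ := Nat.exists_eq_add_of_lt hk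
      filter_upwards [hP.eventually_eq_zero (n + k) (by omega)] with l hl _ using hl
    · filter_upwards [eventually_length] with l hl hln
      omega

end Reduction

/-! ### The Eilenberg–Zilber theorem -/

section Augmentation

/-- The augmentation of the complex of ordered chains, as a functional on lists of length one. -/
def augmentation : Chain R X →ₗ[R] R := linearCombination R fun l => if l.length = 1 then 1 else 0

/-- The involution acting by `(-1) ^ k` on chains of dimension `k`. -/
def degreeSign : Chain R X →ₗ[R] Chain R X :=
  linearCombination R fun l => (-1 : R) ^ (l.length + 1) • single l 1

/-- The boundary operator of the non-augmented complex, which kills the vertices. -/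
def truncBoundary : Chain R X →ₗ[R] Chain R X :=
  boundary - augmentation.smulRight (single [] 1)

@[simp] lemma augmentation_single (l : List X) :
    augmentation (single l (1 : R)) = if l.length = 1 then 1 else 0 := by
  simp [augmentation]

lemma degreeSign_single (l : List X) :
    degreeSign (single l (1 : R)) = (-1 : R) ^ (l.length + 1) • single l 1 := by
  simp [degreeSign]

lemma truncBoundary_apply (z : Chain R X) :
    truncBoundary z = boundary z - augmentation z • single [] 1 := rfl

lemma augmentation_eq_zero {k : ℕ} (hk : k ≠ 1) {s : Set (List X)} (hs : ∀ l ∈ s, l.length = k)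
    {z : Chain R X} (hz : z ∈ supported R R s) : augmentation z = 0 :=
  map_eq_of_mem_supported augmentation 0 (fun l hl => by simp [hs l hl, hk]) hz

lemma boundary_eq_augmentation {z : Chain R X} (hz : z ∈ chainsOn R 1 univ) :
    boundary z = augmentation z • single [] 1 :=
  map_eq_of_mem_supported boundary (augmentation.smulRight (single [] 1)) (fun l hl => by
    obtain ⟨x, rfl⟩ := List.length_eq_one_iff.1 hl.1
    simp [boundary_single, coboundary_cons]) hz

lemma degreeSign_eq_smul {k : ℕ} {s : Set (List X)} (hs : ∀ l ∈ s, l.length = k) {z : Chain R X}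
    (hz : z ∈ supported R R s) : degreeSign z = (-1 : R) ^ (k + 1) • z :=
  map_eq_of_mem_supported degreeSign ((-1 : R) ^ (k + 1) • LinearMap.id)
    (fun l hl => by simp [degreeSign_single, hs l hl]) hz

lemma degreeSign_mem {s : Set (List X)} {z : Chain R X} (hz : z ∈ supported R R s) :
    degreeSign z ∈ supported R R s :=
  map_mem_of_mem_supported degreeSign (fun l hl => by
    rw [degreeSign_single]
    exact Submodule.smul_mem _ _ (single_mem hl)) hz

lemma truncBoundary_single_singleton (x : X) : truncBoundary (single [x] (1 : R)) = 0 := by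
  simp [truncBoundary_apply, boundary_single_cons]

lemma augmentation_boundary (z : Chain R X) : augmentation (boundary z) = 0 := by
  refine map_eq_of_single (augmentation ∘ₗ boundary) 0 (fun l => ?_) z
  rw [LinearMap.comp_apply, LinearMap.zero_apply]
  by_cases hl : l.length = 2
  · obtain ⟨x, y, rfl⟩ := List.length_eq_two.1 hl
    simp [boundary_single_cons]
  · exact augmentation_eq_zero (k := l.length - 1) (by lia) (fun m hm => by grind)
      (boundary_single_mem l)

lemma augmentation_truncBoundary (z : Chain R X) : augmentation (truncBoundary z) = 0 := by
  rw [truncBoundary_apply, map_sub, map_smul, augmentation_boundary, augmentation_single]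
  simp

lemma truncBoundary_truncBoundary (z : Chain R X) : truncBoundary (truncBoundary z) = 0 := by
  rw [truncBoundary_apply (truncBoundary z), augmentation_truncBoundary, truncBoundary_apply,
    map_sub, map_smul, boundary_boundary, boundary_single_nil]
  simp

lemma augmentation_degreeSign (z : Chain R X) : augmentation (degreeSign z) = augmentation z :=
  map_eq_of_single (augmentation ∘ₗ degreeSign) augmentation (fun l => by
    rw [LinearMap.comp_apply, degreeSign_single, map_smul, augmentation_single]
    by_cases hl : l.length = 1 <;> simp [hl]) z

lemma degreeSign_truncBoundary (z : Chain R X) :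
    degreeSign (truncBoundary z) = -truncBoundary (degreeSign z) := by
  refine map_eq_of_single (degreeSign ∘ₗ truncBoundary)
    (-(truncBoundary (R := R) ∘ₗ degreeSign)) (fun l => ?_) z
  simp only [LinearMap.comp_apply, LinearMap.neg_apply, truncBoundary_apply, map_sub, map_smul,
    degreeSign_single]
  rw [degreeSign_eq_smul (k := l.length - 1) (fun m hm => by grind) (boundary_single_mem l)]
  rcases l with _ | ⟨x, l⟩
  · simp
  · by_cases hl : l = []
    · simp [hl, boundary_single_cons]
    · simp [hl, pow_succ]

lemma truncBoundary_single_mem (a : List X) : truncBoundary (single a (1 : R)) ∈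
    supported R R {m : List X | m ≠ [] ∧ m ⊆ a ∧ m.length + 1 = a.length} := by
  rcases a with _ | ⟨x, a⟩
  · simp [truncBoundary_apply]
  by_cases ha : a = []
  · simp [ha, truncBoundary_single_singleton]
  · have haug : augmentation (single (x :: a) (1 : R)) = 0 := by simp [ha]
    rw [truncBoundary_apply, haug, zero_smul, sub_zero]
    refine Finsupp.supported_mono (fun m hm => ?_) (boundary_single_mem _)
    refine ⟨?_, hm.1.subset, hm.2⟩
    rintro rfl
    exact ha (by simpa using hm.2)

lemma truncBoundary_mem (z : Chain R X) :
    truncBoundary z ∈ supported R R {l : List X | l ≠ []} := by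
  refine map_mem_of_mem_supported (s := univ) (truncBoundary (R := R)) (fun l _ => ?_) (by simp)
  refine Finsupp.supported_mono (fun m hm => ?_) (truncBoundary_single_mem l)
  exact hm.1

lemma degreeSign_cone (x : X) (z : Chain R X) : degreeSign (cone x z) = -cone x (degreeSign z) :=
  map_eq_of_single (degreeSign ∘ₗ cone x) (-(cone (R := R) x ∘ₗ degreeSign)) (fun l => by
    simp [degreeSign_single, pow_succ]) z

lemma augmentation_cone {z : Chain R X} (hz : z ∈ supported R R {l : List X | l ≠ []}) (x : X) :
    augmentation (cone x z) = 0 :=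
  map_eq_of_mem_supported (augmentation ∘ₗ cone x) 0 (fun l (hl : l ≠ []) => by simp [hl]) hz

lemma truncBoundary_cone {z : Chain R X} (hz : z ∈ supported R R {l : List X | l ≠ []}) (x : X) :
    truncBoundary (cone x z) =
      z - cone x (truncBoundary z) - augmentation z • single [x] 1 := by
  rw [truncBoundary_apply, augmentation_cone hz, truncBoundary_apply, boundary_cone,
    map_sub, map_smul, cone_single, zero_smul]
  abel

end Augmentation

section TensorChain

variable (R) in
/-- Chains on pairs of lists. Those on pairs of nonempty lists form the tensor product of the
non-augmented complexes of `X` and `Y`; the pair `([], [])` carries its augmentation. -/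
abbrev TensorChain (X Y : Type*) := (List X × List Y) →₀ R

/-- The tensor product of two chains. -/
def tensor : Chain R X →ₗ[R] Chain R Y →ₗ[R] TensorChain R X Y :=
  linearCombination R fun a => lmapDomain R R (Prod.mk a)

@[simp] lemma tensor_single (a : List X) (b : List Y) :
    tensor (single a (1 : R)) (single b 1) = single (a, b) 1 := by
  simp [tensor]

lemma tensor_mem {s : Set (List X)} {t : Set (List Y)} {z : Chain R X} {w : Chain R Y}
    (hz : z ∈ supported R R s) (hw : w ∈ supported R R t) :
    tensor z w ∈ supported R R (s ×ˢ t) :=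
  map_mem_of_mem_supported (tensor.flip w) (fun a ha =>
    map_mem_of_mem_supported (tensor (single a 1)) (fun b hb => by
      rw [tensor_single]
      exact single_mem (by exact ⟨ha, hb⟩)) hw) hz

lemma map₂_eq_of_mem_supported {E : Type*} [AddCommGroup E] [Module R E]
    (f g : Chain R X →ₗ[R] Chain R Y →ₗ[R] E) {s : Set (List X)} {t : Set (List Y)}
    (h : ∀ a ∈ s, ∀ b ∈ t, f (single a 1) (single b 1) = g (single a 1) (single b 1))
    {z : Chain R X} {w : Chain R Y} (hz : z ∈ supported R R s) (hw : w ∈ supported R R t) :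
    f z w = g z w :=
  map_eq_of_mem_supported (f.flip w) (g.flip w) (fun a ha =>
    map_eq_of_mem_supported (f (single a 1)) (g (single a 1)) (h a ha) hw) hz

lemma map₂_eq_of_single {E : Type*} [AddCommGroup E] [Module R E]
    (f g : Chain R X →ₗ[R] Chain R Y →ₗ[R] E)
    (h : ∀ a b, f (single a 1) (single b 1) = g (single a 1) (single b 1))
    (z : Chain R X) (w : Chain R Y) : f z w = g z w :=
  map₂_eq_of_mem_supported (s := univ) (t := univ) f g (fun a _ b _ => h a b) (by simp) (by simp)

/-- The boundary operator of the augmented tensor product complex. -/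
def tensorBoundary : TensorChain R X Y →ₗ[R] TensorChain R X Y := linearCombination R fun p =>
  tensor (truncBoundary (single p.1 1)) (single p.2 1) +
    tensor (degreeSign (single p.1 1)) (truncBoundary (single p.2 1)) +
    (augmentation (single p.1 (1 : R)) * augmentation (single p.2 (1 : R))) • single ([], []) 1

lemma tensorBoundary_tensor (z : Chain R X) (w : Chain R Y) : tensorBoundary (tensor z w) =
    tensor (truncBoundary z) w + tensor (degreeSign z) (truncBoundary w) +
      (augmentation z * augmentation w) • single ([], []) 1 := by
  refine map₂_eq_of_single (tensor.compr₂ tensorBoundary)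
    (tensor.comp truncBoundary + tensor.compl₁₂ degreeSign truncBoundary +
      ((LinearMap.mul R R).compl₁₂ augmentation augmentation).compr₂
        ((LinearMap.id (R := R) (M := R)).smulRight (single ([], []) 1)))
    (fun a b => ?_) z w
  simp [tensorBoundary]

@[simp] lemma tensorBoundary_single_nil :
    tensorBoundary (single (([] : List X), ([] : List Y)) (1 : R)) = 0 := by
  simp [tensorBoundary, truncBoundary_apply]

@[simp] lemma tensorBoundary_tensorBoundary (z : TensorChain R X Y) :
    tensorBoundary (tensorBoundary z) = 0 := by
  refine map_eq_of_single (tensorBoundary ∘ₗ tensorBoundary) 0 (fun p => ?_) z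
  rw [LinearMap.comp_apply, ← tensor_single, tensorBoundary_tensor, map_add, map_add,
    tensorBoundary_tensor, tensorBoundary_tensor, map_smul, tensorBoundary_single_nil,
    truncBoundary_truncBoundary, truncBoundary_truncBoundary, degreeSign_truncBoundary,
    augmentation_truncBoundary, augmentation_truncBoundary]
  simp

variable (X Y) in
/-- The basis of the augmented tensor product complex inside `TensorChain R X Y`. -/
def tensorBasis : Set (List X × List Y) := {p | p.1 = [] ↔ p.2 = []}

/-- The degree of a pair of lists in the tensor product complex, shifted by one as for `Chain`. -/
def tensorDegree (p : List X × List Y) : ℕ := p.1.length + p.2.length - 1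

variable (R) in
/-- The chains of degree `k` of the tensor product complex with vertices in `Q` and in `Q'`. -/
def tensorChainsOn (k : ℕ) (Q : Set X) (Q' : Set Y) : Submodule R (TensorChain R X Y) :=
  supported R R {p | p ∈ tensorBasis X Y ∧ tensorDegree p = k ∧
    (∀ x ∈ p.1, x ∈ Q) ∧ ∀ y ∈ p.2, y ∈ Q'}

lemma tensorChainsOn_mono {k : ℕ} {Q Q₁ : Set X} {Q' Q₁' : Set Y} (h : Q ⊆ Q₁) (h' : Q' ⊆ Q₁') :
    tensorChainsOn R k Q Q' ≤ tensorChainsOn R k Q₁ Q₁' :=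
  Finsupp.supported_mono fun _ hp =>
    ⟨hp.1, hp.2.1, fun x hx => h (hp.2.2.1 x hx), fun y hy => h' (hp.2.2.2 y hy)⟩

lemma nil_mem_tensorBasis : (([] : List X), ([] : List Y)) ∈ tensorBasis X Y := by
  simp [tensorBasis]

lemma mem_tensorBasis_of_ne_nil {a : List X} {b : List Y} (ha : a ≠ []) (hb : b ≠ []) :
    (a, b) ∈ tensorBasis X Y := by
  simp [tensorBasis, ha, hb]

lemma eq_nil_or_ne_nil_of_mem_tensorBasis {p : List X × List Y} (hp : p ∈ tensorBasis X Y) :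
    p = ([], []) ∨ p.1 ≠ [] ∧ p.2 ≠ [] := by
  by_cases ha : p.1 = []
  · exact Or.inl (Prod.ext ha (hp.1 ha))
  · exact Or.inr ⟨ha, mt hp.2 ha⟩

lemma tensorDegree_eq_zero_iff {p : List X × List Y} (hp : p ∈ tensorBasis X Y) :
    tensorDegree p = 0 ↔ p = ([], []) := by
  rcases eq_nil_or_ne_nil_of_mem_tensorBasis hp with rfl | ⟨ha, hb⟩
  · simp [tensorDegree]
  · have := List.length_pos_iff.2 ha
    have := List.length_pos_iff.2 hb
    exact iff_of_false (by unfold tensorDegree; lia) (by rintro rfl; simp at ha)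

lemma ne_nil_of_tensorDegree_pos {p : List X × List Y} (hp : p ∈ tensorBasis X Y)
    (h : 0 < tensorDegree p) : p.1 ≠ [] ∧ p.2 ≠ [] :=
  (eq_nil_or_ne_nil_of_mem_tensorBasis hp).resolve_left fun h' =>
    h.ne' ((tensorDegree_eq_zero_iff hp).2 h')

lemma single_mem_tensorChainsOn {a : List X} {b : List Y} (hab : (a, b) ∈ tensorBasis X Y)
    {k : ℕ} (hk : tensorDegree (a, b) = k) {Q : Set X} {Q' : Set Y} (ha : ∀ x ∈ a, x ∈ Q)
    (hb : ∀ y ∈ b, y ∈ Q') : single (a, b) 1 ∈ tensorChainsOn R k Q Q' :=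
  single_mem (by exact ⟨hab, hk, ha, hb⟩)

lemma tensorBoundary_single_mem {p : List X × List Y} (hp : p ∈ tensorBasis X Y) :
    tensorBoundary (single p (1 : R)) ∈ supported R R {q : List X × List Y |
      q ∈ tensorBasis X Y ∧ tensorDegree q + 1 = tensorDegree p ∧ q.1 ⊆ p.1 ∧ q.2 ⊆ p.2} := by
  rcases eq_nil_or_ne_nil_of_mem_tensorBasis hp with rfl | ⟨ha, hb⟩
  · simp
  obtain ⟨a, b⟩ := p
  have la := List.length_pos_iff.2 ha
  have lb := List.length_pos_iff.2 hb
  rw [← tensor_single, tensorBoundary_tensor]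
  refine Submodule.add_mem _ (Submodule.add_mem _ ?_ ?_) ?_
  · refine Finsupp.supported_mono ?_
      (tensor_mem (truncBoundary_single_mem a) (single_mem (mem_singleton b)))
    rintro ⟨m, _⟩ ⟨⟨hm, hma, hlen⟩, rfl⟩
    have := List.length_pos_iff.2 hm
    exact ⟨mem_tensorBasis_of_ne_nil hm hb, by grind [tensorDegree], hma, List.Subset.refl _⟩
  · refine Finsupp.supported_mono ?_
      (tensor_mem (degreeSign_mem (single_mem (mem_singleton a))) (truncBoundary_single_mem b))
    rintro ⟨_, m⟩ ⟨rfl, hm, hmb, hlen⟩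
    have := List.length_pos_iff.2 hm
    exact ⟨mem_tensorBasis_of_ne_nil ha hm, by grind [tensorDegree], List.Subset.refl _, hmb⟩
  · rw [augmentation_single, augmentation_single]
    split_ifs with ha₁ hb₁
    · exact Submodule.smul_mem _ _ (single_mem (by
        exact ⟨nil_mem_tensorBasis, by simp_all [tensorDegree], by simp, by simp⟩))
    all_goals simp

/-- The contracting homotopy of the tensor product complex given by the vertex `(x, y)`. -/
def contraction (x : X) (y : Y) : TensorChain R X Y →ₗ[R] TensorChain R X Y :=
  linearCombination R fun p =>
    if p.1 = [] then single ([x], [y]) 1 else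
      tensor (cone x (single p.1 1)) (single p.2 1) +
        augmentation (single p.1 (1 : R)) • tensor (single [x] 1) (cone y (single p.2 1))

@[simp] lemma contraction_single_nil (x : X) (y : Y) :
    contraction x y (single ([], []) (1 : R)) = single ([x], [y]) 1 := by
  simp [contraction]

lemma contraction_tensor {z : Chain R X} (hz : z ∈ supported R R {l : List X | l ≠ []})
    (w : Chain R Y) (x : X) (y : Y) : contraction x y (tensor z w) =
      tensor (cone x z) w + augmentation z • tensor (single [x] 1) (cone y w) := by
  refine map₂_eq_of_mem_supported (t := univ) (tensor.compr₂ (contraction x y))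
    (tensor.comp (cone x) +
      augmentation.smulRight ((tensor (single [x] (1 : R))).comp (cone y)))
    (fun a ha b _ => ?_) hz (by simp)
  have ha : a ≠ [] := ha
  simp only [LinearMap.compr₂_apply, tensor_single, contraction, Finsupp.linearCombination_single,
    ha, if_false, one_smul, LinearMap.add_apply, LinearMap.comp_apply, LinearMap.smulRight_apply,
    LinearMap.smul_apply]

lemma tensorBoundary_contraction_tensor {z : Chain R X} {w : Chain R Y}
    (hz : z ∈ supported R R {l : List X | l ≠ []}) (hw : w ∈ supported R R {l : List Y | l ≠ []})
    (x : X) (y : Y) :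
    tensorBoundary (contraction x y (tensor z w)) + contraction x y (tensorBoundary (tensor z w)) =
      tensor z w := by
  have hsign : degreeSign (single [x] (1 : R)) = single [x] 1 := by simp [degreeSign_single]
  rw [contraction_tensor hz, tensorBoundary_tensor]
  simp only [map_add, map_smul, tensorBoundary_tensor, truncBoundary_cone hz,
    truncBoundary_cone hw, augmentation_cone hz, augmentation_cone hw, degreeSign_cone, hsign,
    contraction_tensor (truncBoundary_mem z), contraction_tensor (degreeSign_mem hz),
    augmentation_truncBoundary, augmentation_degreeSign, truncBoundary_single_singleton,
    contraction_single_nil, map_sub, LinearMap.sub_apply, LinearMap.smul_apply, map_neg,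
    LinearMap.neg_apply, LinearMap.map_zero, LinearMap.zero_apply, tensor_single, zero_mul,
    mul_zero, zero_smul, add_zero, zero_add, smul_sub, smul_smul]
  abel

lemma tensorBoundary_contraction {p : List X × List Y} (hp : p ∈ tensorBasis X Y) (x : X) (y : Y) :
    tensorBoundary (contraction x y (single p 1)) + contraction x y (tensorBoundary (single p 1)) =
      single p (1 : R) := by
  rcases eq_nil_or_ne_nil_of_mem_tensorBasis hp with rfl | ⟨ha, hb⟩
  · rw [contraction_single_nil, tensorBoundary_single_nil, ← tensor_single, tensorBoundary_tensor]
    simp [truncBoundary_single_singleton]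
  · simpa using tensorBoundary_contraction_tensor (R := R) (single_mem (by exact ha))
      (single_mem (by exact hb)) x y

lemma contraction_mem {Q : Set X} {Q' : Set Y} {x : X} (hx : x ∈ Q) {y : Y} (hy : y ∈ Q') {k : ℕ}
    {z : TensorChain R X Y} (hz : z ∈ tensorChainsOn R k Q Q') :
    contraction x y z ∈ tensorChainsOn R (k + 1) Q Q' := by
  refine map_mem_of_mem_supported (contraction x y) (fun p hp => ?_) hz
  obtain ⟨hbasis, rfl, hQ, hQ'⟩ := hp
  rcases eq_nil_or_ne_nil_of_mem_tensorBasis hbasis with rfl | ⟨ha, hb⟩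
  · rw [contraction_single_nil]
    exact single_mem_tensorChainsOn (mem_tensorBasis_of_ne_nil (by simp) (by simp))
      (by simp [tensorDegree]) (by simpa using hx) (by simpa using hy)
  obtain ⟨a, b⟩ := p
  have la := List.length_pos_iff.2 ha
  rw [← tensor_single, contraction_tensor (single_mem (by exact ha)), cone_single, cone_single,
    tensor_single, tensor_single, augmentation_single]
  refine Submodule.add_mem _ (single_mem_tensorChainsOn (mem_tensorBasis_of_ne_nil (by simp) hb)
    (by grind [tensorDegree]) (by simpa [hx] using hQ) hQ') ?_
  split_ifs with ha₁
  · exact Submodule.smul_mem _ _ (single_mem_tensorChainsOn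
      (mem_tensorBasis_of_ne_nil (by simp) (by simp)) (by grind [tensorDegree])
      (by simpa using hx) (by simpa [hy] using hQ'))
  · simp

lemma exists_tensorBoundary_eq {k : ℕ} {Q : Set X} {Q' : Set Y} (hQ : Q.Nonempty)
    (hQ' : Q'.Nonempty) {z : TensorChain R X Y} (hz : z ∈ tensorChainsOn R k Q Q')
    (hb : tensorBoundary z = 0) : ∃ w ∈ tensorChainsOn R (k + 1) Q Q', tensorBoundary w = z := by
  obtain ⟨x, hx⟩ := hQ
  obtain ⟨y, hy⟩ := hQ'
  refine ⟨contraction x y z, contraction_mem hx hy hz, ?_⟩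
  have := map_eq_of_mem_supported
    (tensorBoundary ∘ₗ contraction x y + contraction x y ∘ₗ tensorBoundary) LinearMap.id
    (fun p hp => by simpa using tensorBoundary_contraction hp.1 x y) hz
  simpa [hb] using this

end TensorChain

section EilenbergZilber

/-- An Alexander–Whitney map: an augmentation preserving chain map from the ordered chains of the
product to the tensor product complex, carried by the projections. -/
structure IsAlexanderWhitney (W : Chain R (X × Y) →ₗ[R] TensorChain R X Y) : Prop where
  comm : ∀ z, tensorBoundary (W z) = W (boundary z)
  map_nil : W (single [] 1) = single ([], []) 1
  mem : ∀ l, W (single l 1) ∈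
    tensorChainsOn R l.length {x | x ∈ l.map Prod.fst} {y | y ∈ l.map Prod.snd}

/-- An Eilenberg–Zilber map: an augmentation preserving chain map from the tensor product complex
to the ordered chains of the product, carried by the products of the sets of vertices. -/
structure IsEilenbergZilber (G : TensorChain R X Y →ₗ[R] Chain R (X × Y)) : Prop where
  comm : ∀ p ∈ tensorBasis X Y, boundary (G (single p 1)) = G (tensorBoundary (single p 1))
  map_nil : G (single ([], []) 1) = single [] 1
  mem : ∀ p ∈ tensorBasis X Y,
    G (single p 1) ∈ chainsOn R (tensorDegree p) {q | q.1 ∈ p.1 ∧ q.2 ∈ p.2}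

theorem exists_isAlexanderWhitney (R : Type*) [CommRing R] (X Y : Type*) :
    ∃ W : Chain R (X × Y) →ₗ[R] TensorChain R X Y, IsAlexanderWhitney W := by
  let carrier (k : ℕ) (l : List (X × Y)) : Submodule R (TensorChain R X Y) :=
    tensorChainsOn R k {x | x ∈ l.map Prod.fst} {y | y ∈ l.map Prod.snd}
  obtain ⟨W, hW⟩ := exists_carried_map (R := R) List.length boundary_boundary tensorBoundary univ
    (fun l => carrier (l.length - 1) l) (fun l => carrier l.length l) 0 1
    (fun l _ => by
      refine Finsupp.supported_mono (fun m hm => ?_) (boundary_single_mem l)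
      refine ⟨trivial, by grind, ?_⟩
      rw [← hm.2, Nat.add_sub_cancel]
      exact tensorChainsOn_mono (List.map_subset _ hm.1.subset) (List.map_subset _ hm.1.subset))
    (fun l _ _ => Submodule.zero_mem _) (by simp)
    (fun l _ hl z hz hd => by
      obtain ⟨q, hq⟩ := List.exists_mem_of_length_pos hl
      have := exists_tensorBoundary_eq (by exact ⟨q.1, List.mem_map_of_mem hq⟩)
        (by exact ⟨q.2, List.mem_map_of_mem hq⟩) hz hd
      rwa [Nat.sub_add_cancel hl] at this)
    (fun _ => single ([], []) 1)
    (fun l _ hl => ⟨single_mem_tensorChainsOn nil_mem_tensorBasis (by simp [tensorDegree, hl])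
      (by simp) (by simp), by simp⟩)
  refine ⟨W, ⟨fun z => ?_, (hW [] trivial).2.2 rfl, fun l => (hW l trivial).1⟩⟩
  exact map_eq_of_single (tensorBoundary ∘ₗ W) (W ∘ₗ boundary)
    (fun l => by simpa using (hW l trivial).2.1) z

theorem exists_isEilenbergZilber (R : Type*) [CommRing R] (X Y : Type*) :
    ∃ G : TensorChain R X Y →ₗ[R] Chain R (X × Y), IsEilenbergZilber G := by
  let carrier (k : ℕ) (p : List X × List Y) : Submodule R (Chain R (X × Y)) :=
    chainsOn R k {q | q.1 ∈ p.1 ∧ q.2 ∈ p.2}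
  obtain ⟨G, hG⟩ := exists_carried_map (R := R) tensorDegree tensorBoundary_tensorBoundary boundary
    (tensorBasis X Y) (fun p => carrier (tensorDegree p - 1) p)
    (fun p => carrier (tensorDegree p) p) 0 1
    (fun p hp => by
      refine Finsupp.supported_mono (fun m hm => ?_) (tensorBoundary_single_mem hp)
      refine ⟨hm.1, by grind, ?_⟩
      rw [← hm.2.1, Nat.add_sub_cancel]
      exact chainsOn_mono fun q hq => ⟨hm.2.2.1 hq.1, hm.2.2.2 hq.2⟩)
    (fun p _ _ => Submodule.zero_mem _) (by simp)
    (fun p hp hdeg z hz hd => by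
      have hne := ne_nil_of_tensorDegree_pos hp hdeg
      obtain ⟨x, hx⟩ := List.exists_mem_of_ne_nil _ hne.1
      obtain ⟨y, hy⟩ := List.exists_mem_of_ne_nil _ hne.2
      have := exists_boundary_eq (by exact ⟨(x, y), hx, hy⟩) hz hd
      rwa [Nat.sub_add_cancel hdeg] at this)
    (fun _ => single [] 1)
    (fun p _ hdeg => ⟨single_mem_chainsOn (by simp [hdeg]) (by simp), by simp⟩)
  exact ⟨G, ⟨fun p hp => by simpa using (hG p hp).2.1,
    (hG ([], []) nil_mem_tensorBasis).2.2 rfl, fun p hp => (hG p hp).1⟩⟩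

lemma IsEilenbergZilber.comm_of_mem {G : TensorChain R X Y →ₗ[R] Chain R (X × Y)}
    (hG : IsEilenbergZilber G) {z : TensorChain R X Y} (hz : z ∈ supported R R (tensorBasis X Y)) :
    boundary (G z) = G (tensorBoundary z) :=
  map_eq_of_mem_supported (boundary ∘ₗ G) (G ∘ₗ tensorBoundary) hG.comm hz

lemma IsAlexanderWhitney.map_mem {W : Chain R (X × Y) →ₗ[R] TensorChain R X Y}
    (hW : IsAlexanderWhitney W) {k : ℕ} {Q : Set X} {Q' : Set Y} {z : Chain R (X × Y)}
    (hz : z ∈ chainsOn R k {q | q.1 ∈ Q ∧ q.2 ∈ Q'}) : W z ∈ tensorChainsOn R k Q Q' := by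
  refine map_mem_of_mem_supported W (fun l hl => ?_) hz
  refine hl.1 ▸ tensorChainsOn_mono ?_ ?_ (hW.mem l)
  · exact fun x hx => by obtain ⟨q, hq, rfl⟩ := List.mem_map.1 hx; exact (hl.2 q hq).1
  · exact fun y hy => by obtain ⟨q, hq, rfl⟩ := List.mem_map.1 hy; exact (hl.2 q hq).2

/-- Half of the Eilenberg–Zilber theorem. -/
theorem IsAlexanderWhitney.exists_homotopy {W : Chain R (X × Y) →ₗ[R] TensorChain R X Y}
    (hW : IsAlexanderWhitney W) {G : TensorChain R X Y →ₗ[R] Chain R (X × Y)}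
    (hG : IsEilenbergZilber G) :
    ∃ L : TensorChain R X Y →ₗ[R] TensorChain R X Y, ∀ p ∈ tensorBasis X Y,
      L (single p 1) ∈ tensorChainsOn R (tensorDegree p + 1) {x | x ∈ p.1} {y | y ∈ p.2} ∧
      tensorBoundary (L (single p 1)) =
        W (G (single p 1)) - single p 1 - L (tensorBoundary (single p 1)) := by
  let carrier (k : ℕ) (p : List X × List Y) : Submodule R (TensorChain R X Y) :=
    tensorChainsOn R k {x | x ∈ p.1} {y | y ∈ p.2}
  obtain ⟨L, hL⟩ := exists_carried_map (R := R) tensorDegree tensorBoundary_tensorBoundary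
    tensorBoundary (tensorBasis X Y) (fun p => carrier (tensorDegree p) p)
    (fun p => carrier (tensorDegree p + 1) p) (W ∘ₗ G - LinearMap.id) (-1)
    (fun p hp => by
      refine Finsupp.supported_mono (fun m hm => ?_) (tensorBoundary_single_mem hp)
      refine ⟨hm.1, by grind, ?_⟩
      rw [hm.2.1]
      exact tensorChainsOn_mono hm.2.2.1 hm.2.2.2)
    (fun p hp _ => Submodule.sub_mem _ (hW.map_mem (hG.mem p hp))
      (single_mem_tensorChainsOn hp rfl (fun _ h => h) (fun _ h => h)))
    (fun p hp => by simp [hW.comm, hG.comm p hp])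
    (fun p hp hdeg z hz hd => by
      have hne := ne_nil_of_tensorDegree_pos hp hdeg
      exact exists_tensorBoundary_eq (List.exists_mem_of_ne_nil _ hne.1)
        (List.exists_mem_of_ne_nil _ hne.2) hz hd)
    (fun _ => 0)
    (fun p hp hdeg => by
      obtain rfl := (tensorDegree_eq_zero_iff hp).1 hdeg
      simp [hG.map_nil, hW.map_nil])
  exact ⟨L, fun p hp => ⟨(hL p hp).1, by simpa [sub_eq_add_neg] using (hL p hp).2.1⟩⟩

end EilenbergZilber

section ProductMap

namespace IsAugmentedMap

variable {T : Chain R X →ₗ[R] Chain R X} (hT : IsAugmentedMap T)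
include hT

lemma augmentation_map (z : Chain R X) : augmentation (T z) = augmentation z := by
  refine map_eq_of_single (augmentation ∘ₗ T) augmentation (fun l => ?_) z
  rw [LinearMap.comp_apply]
  have hTl := hT.mem l
  by_cases hl : l.length = 1
  · rw [hl] at hTl
    have hcomm := hT.comm (single l 1)
    rw [boundary_eq_augmentation hTl, boundary_eq_augmentation (single_mem_chainsOn hl (by simp)),
      map_smul, hT.map_nil] at hcomm
    simpa [hl] using congrArg (fun z => z ([] : List X)) hcomm
  · rw [augmentation_eq_zero hl (fun m hm => hm.1) hTl, augmentation_single, if_neg hl]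

lemma truncBoundary_map (z : Chain R X) : truncBoundary (T z) = T (truncBoundary z) := by
  rw [truncBoundary_apply, truncBoundary_apply, map_sub, map_smul, hT.map_nil, hT.comm,
    hT.augmentation_map]

lemma degreeSign_map (z : Chain R X) : degreeSign (T z) = T (degreeSign z) :=
  map_eq_of_single (degreeSign ∘ₗ T) (T ∘ₗ degreeSign) (fun l => by
    rw [LinearMap.comp_apply, LinearMap.comp_apply, degreeSign_single, map_smul,
      degreeSign_eq_smul (fun m hm => hm.1) (hT.mem l)]) z

end IsAugmentedMap

/-- The tensor product of two operators on chains. -/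
def tensorMap (T : Chain R X →ₗ[R] Chain R X) (T' : Chain R Y →ₗ[R] Chain R Y) :
    TensorChain R X Y →ₗ[R] TensorChain R X Y :=
  linearCombination R fun p => tensor (T (single p.1 1)) (T' (single p.2 1))

variable {T : Chain R X →ₗ[R] Chain R X} {T' : Chain R Y →ₗ[R] Chain R Y}

lemma tensorMap_single (p : List X × List Y) :
    tensorMap T T' (single p 1) = tensor (T (single p.1 1)) (T' (single p.2 1)) := by
  simp [tensorMap]

lemma tensorMap_tensor (z : Chain R X) (w : Chain R Y) :
    tensorMap T T' (tensor z w) = tensor (T z) (T' w) := by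
  refine map₂_eq_of_single (tensor.compr₂ (tensorMap T T')) (tensor.compl₁₂ T T')
    (fun a b => ?_) z w
  simp [tensorMap_single]

lemma tensorBoundary_tensorMap (hT : IsAugmentedMap T) (hT' : IsAugmentedMap T')
    (z : TensorChain R X Y) :
    tensorBoundary (tensorMap T T' z) = tensorMap T T' (tensorBoundary z) := by
  refine map_eq_of_single (tensorBoundary ∘ₗ tensorMap T T') (tensorMap T T' ∘ₗ tensorBoundary)
    (fun p => ?_) z
  rw [LinearMap.comp_apply, LinearMap.comp_apply, ← tensor_single, tensorMap_tensor,
    tensorBoundary_tensor, tensorBoundary_tensor, map_add, map_add, map_smul, tensorMap_tensor,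
    tensorMap_tensor, hT.truncBoundary_map, hT'.truncBoundary_map, hT.degreeSign_map,
    hT.augmentation_map, hT'.augmentation_map, tensorMap_single, hT.map_nil, hT'.map_nil,
    tensor_single]

lemma tensorMap_single_mem {p : List X × List Y} (hp : p ∈ tensorBasis X Y) {Q : Set X} {Q' : Set Y}
    (hQ : T (single p.1 1) ∈ chainsOn R p.1.length Q)
    (hQ' : T' (single p.2 1) ∈ chainsOn R p.2.length Q') :
    tensorMap T T' (single p 1) ∈ tensorChainsOn R (tensorDegree p) Q Q' := by
  rw [tensorMap_single]
  refine Finsupp.supported_mono ?_ (tensor_mem hQ hQ')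
  rintro ⟨a, b⟩ ⟨⟨ha, hQ⟩, hb, hQ'⟩
  refine ⟨?_, by simp_all [tensorDegree], hQ, hQ'⟩
  have hp : p.1.length = 0 ↔ p.2.length = 0 := by
    rw [List.length_eq_zero_iff, List.length_eq_zero_iff]
    exact hp
  rw [← ha, ← hb, List.length_eq_zero_iff, List.length_eq_zero_iff] at hp
  exact hp

lemma IsEilenbergZilber.map_mem {G : TensorChain R X Y →ₗ[R] Chain R (X × Y)}
    (hG : IsEilenbergZilber G) {k : ℕ} {Q : Set X} {Q' : Set Y} {z : TensorChain R X Y}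
    (hz : z ∈ tensorChainsOn R k Q Q') : G z ∈ chainsOn R k {q | q.1 ∈ Q ∧ q.2 ∈ Q'} :=
  map_mem_of_mem_supported G (fun p hp => by
    have hGp := hG.mem p hp.1
    rw [hp.2.1] at hGp
    refine chainsOn_mono (fun q hq => ?_) hGp
    exact ⟨hp.2.2.1 _ hq.1, hp.2.2.2 _ hq.2⟩) hz

section

variable {W : Chain R (X × Y) →ₗ[R] TensorChain R X Y} {G : TensorChain R X Y →ₗ[R] Chain R (X × Y)}
  (hW : IsAlexanderWhitney W) (hG : IsEilenbergZilber G)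
include hW hG

lemma map_tensorMap_single_mem {l : List (X × Y)} {Q : Set X} {Q' : Set Y}
    (hQ : ∀ a ⊆ l.map Prod.fst, T (single a 1) ∈ chainsOn R a.length Q)
    (hQ' : ∀ b ⊆ l.map Prod.snd, T' (single b 1) ∈ chainsOn R b.length Q') :
    (G ∘ₗ tensorMap T T' ∘ₗ W) (single l 1) ∈
      chainsOn R l.length {q | q.1 ∈ Q ∧ q.2 ∈ Q'} := by
  refine hG.map_mem (map_mem_of_mem_supported (tensorMap T T') (fun p hp => ?_) (hW.mem l))
  obtain ⟨hbasis, hdeg, hp₁, hp₂⟩ := hp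
  rw [← hdeg]
  exact tensorMap_single_mem hbasis (hQ p.1 hp₁) (hQ' p.2 hp₂)

lemma isAugmentedMap_comp_tensorMap (hT : IsAugmentedMap T) (hT' : IsAugmentedMap T') :
    IsAugmentedMap (G ∘ₗ tensorMap T T' ∘ₗ W) where
  comm z := by
    have hbasis (l : List (X × Y)) :
        tensorMap T T' (W (single l 1)) ∈ supported R R (tensorBasis X Y) := by
      refine map_mem_of_mem_supported (tensorMap T T') (fun p hp => ?_) (hW.mem l)
      refine Finsupp.supported_mono (fun q hq => ?_)
        (tensorMap_single_mem hp.1 (hT.mem p.1) (hT'.mem p.2))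
      exact hq.1
    refine map_eq_of_single (boundary ∘ₗ G ∘ₗ tensorMap T T' ∘ₗ W)
      ((G ∘ₗ tensorMap T T' ∘ₗ W) ∘ₗ boundary) (fun l => ?_) z
    simp only [LinearMap.comp_apply]
    rw [hG.comm_of_mem (hbasis l), tensorBoundary_tensorMap hT hT', hW.comm]
  map_nil := by
    simp only [LinearMap.comp_apply, hW.map_nil, tensorMap_single, hT.map_nil, hT'.map_nil,
      tensor_single, hG.map_nil]
  mem l := by
    simpa using map_tensorMap_single_mem hW hG (l := l) (fun a _ => hT.mem a) fun b _ => hT'.mem b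

end

end ProductMap

section Product

variable [PseudoMetricSpace X] [PseudoMetricSpace Y] {δ ρ : ℝ} {l : List (X × Y)}

lemma IsSmall.map_fst (hl : IsSmall δ l) : IsSmall δ (l.map Prod.fst) := by
  intro x hx x' hx'
  obtain ⟨q, hq, rfl⟩ := List.mem_map.1 hx
  obtain ⟨q', hq', rfl⟩ := List.mem_map.1 hx'
  exact (le_max_left _ _).trans_lt (hl q hq q' hq')

lemma IsSmall.map_snd (hl : IsSmall δ l) : IsSmall δ (l.map Prod.snd) := by
  intro y hy y' hy'
  obtain ⟨q, hq, rfl⟩ := List.mem_map.1 hy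
  obtain ⟨q', hq', rfl⟩ := List.mem_map.1 hy'
  exact (le_max_right _ _).trans_lt (hl q hq q' hq')

variable {T : Chain R X →ₗ[R] Chain R X} {T' : Chain R Y →ₗ[R] Chain R Y}
  {W : Chain R (X × Y) →ₗ[R] TensorChain R X Y} {G : TensorChain R X Y →ₗ[R] Chain R (X × Y)}

lemma movesLessThan_comp_tensorMap (hW : IsAlexanderWhitney W) (hG : IsEilenbergZilber G)
    (hρ : 0 < ρ) (hT : MovesLessThan (ρ / 2) T) (hT' : MovesLessThan (ρ / 2) T') :
    MovesLessThan ρ (G ∘ₗ tensorMap T T' ∘ₗ W) := by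
  obtain ⟨δ, hδ, hT⟩ := hT
  obtain ⟨δ', hδ', hT'⟩ := hT'
  refine ⟨min (min δ δ') (ρ / 2), by positivity, fun l hl => ?_⟩
  have hδl := hl.mono (min_le_left _ _)
  refine chainsOn_mono ?_ (map_tensorMap_single_mem hW hG
    (Q := {x | ∃ q ∈ l, dist x q.1 < ρ / 2}) (Q' := {y | ∃ q ∈ l, dist y q.2 < ρ / 2})
    (fun a ha => ?_) fun b hb => ?_)
  · rintro ⟨x, y⟩ ⟨⟨q, hq, hxq⟩, q', hq', hyq'⟩
    have hqq' := (le_max_right _ _).trans_lt ((hl q' hq' q hq).trans_le (min_le_right _ _))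
    refine ⟨q, hq, max_lt (by linarith) ?_⟩
    linarith [dist_triangle y q'.2 q.2]
  · refine chainsOn_mono ?_ (hT a ((hδl.mono (min_le_left _ _)).map_fst.subset ha))
    rintro x ⟨x', hx', hxx'⟩
    obtain ⟨q, hq, rfl⟩ := List.mem_map.1 (ha hx')
    exact ⟨q, hq, hxx'⟩
  · refine chainsOn_mono ?_ (hT' b ((hδl.mono (min_le_right _ _)).map_snd.subset hb))
    rintro y ⟨y', hy', hyy'⟩
    obtain ⟨q, hq, rfl⟩ := List.mem_map.1 (hb hy')
    exact ⟨q, hq, hyy'⟩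

lemma tensorMap_eq_zero_of_isSmall (hW : IsAlexanderWhitney W) {n m : ℕ}
    (hT : ∀ a, IsSmall δ a → n + 1 < a.length → T (single a 1) = 0)
    (hT' : ∀ b, IsSmall δ b → m + 1 < b.length → T' (single b 1) = 0) (hl : IsSmall δ l)
    (hlen : n + m + 1 < l.length) : tensorMap T T' (W (single l 1)) = 0 := by
  refine map_eq_of_mem_supported (tensorMap T T') 0 (fun p hp => ?_) (hW.mem l)
  obtain ⟨-, hdeg, hp₁, hp₂⟩ := hp
  rw [tensorMap_single, LinearMap.zero_apply]
  by_cases hn : n + 1 < p.1.length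
  · rw [hT p.1 (hl.map_fst.subset hp₁) hn, map_zero, LinearMap.zero_apply]
  · rw [hT' p.2 (hl.map_snd.subset hp₂) (by unfold tensorDegree at hdeg; lia), map_zero]

theorem relAcyclic_prod [CompactSpace X] [CompactSpace Y] {n m k : ℕ}
    (hX : ∀ i > n, ∀ S : Set X, IsClosed S → RelAcyclic R i S)
    (hY : ∀ i > m, ∀ S : Set Y, IsClosed S → RelAcyclic R i S) (hk : n + m < k)
    (C : Set (X × Y)) : RelAcyclic R k C := by
  intro c hc
  obtain ⟨ρ, hρ, hcob⟩ := hc.exists_pos_isRelCoboundary_sub (R := R)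
  obtain ⟨T, hT, hTρ, δ, hδ, hT₀⟩ := exists_dimension_reduction hX (half_pos hρ)
  obtain ⟨T', hT', hTρ', δ', hδ', hT₀'⟩ := exists_dimension_reduction hY (half_pos hρ)
  obtain ⟨W, hW⟩ := exists_isAlexanderWhitney R X Y
  obtain ⟨G, hG⟩ := exists_isEilenbergZilber R X Y
  refine (hcob _ (isAugmentedMap_comp_tensorMap hW hG hT hT')
    (movesLessThan_comp_tensorMap hW hG hρ hTρ hTρ')).congr
    (eventually_smallNear_univ.2 ⟨min δ δ', lt_min hδ hδ', fun l hlen hl => ?_⟩)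
  have hzero : tensorMap T T' (W (single l 1)) = 0 :=
    tensorMap_eq_zero_of_isSmall hW (fun a ha => hT₀ a (ha.mono (min_le_left _ _)))
      (fun b hb => hT₀' b (hb.mono (min_le_right _ _))) hl (by lia)
  simp [hzero]

end Product

/-! ### Cross products -/

section CrossProduct

variable {c : List X → R} {c' : List Y → R}

/-- The cross product of two cochains, as a functional on the tensor product of the chains. -/
def crossProduct (c : List X → R) (c' : List Y → R) : TensorChain R X Y →ₗ[R] R :=
  linearCombination R fun p => c p.1 * c' p.2

lemma crossProduct_single (p : List X × List Y) :
    crossProduct c c' (single p 1) = c p.1 * c' p.2 := by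
  simp [crossProduct]

lemma crossProduct_tensor (z : Chain R X) (w : Chain R Y) :
    crossProduct c c' (tensor z w) = linearCombination R c z * linearCombination R c' w :=
  map₂_eq_of_single (tensor.compr₂ (crossProduct c c'))
    ((LinearMap.mul R R).compl₁₂ (linearCombination R c) (linearCombination R c'))
    (fun a b => by simp [crossProduct_single]) z w

lemma linearCombination_truncBoundary_single (hc : c [] = 0) (l : List X) :
    linearCombination R c (truncBoundary (single l 1)) = coboundary c l := by
  rw [truncBoundary_apply, map_sub, map_smul, linearCombination_boundary_single]
  simp [hc]

lemma crossProduct_tensorBoundary_single (hc : c [] = 0) (hc' : c' [] = 0) {p : List X × List Y}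
    (h : coboundary c p.1 = 0) (h' : coboundary c' p.2 = 0) :
    crossProduct c c' (tensorBoundary (single p 1)) = 0 := by
  rw [← tensor_single, tensorBoundary_tensor, map_add, map_add, map_smul, crossProduct_tensor,
    crossProduct_tensor, linearCombination_truncBoundary_single hc,
    linearCombination_truncBoundary_single hc', h, h', crossProduct_single]
  simp [hc]

end CrossProduct

section Scale

variable [PseudoMetricSpace X] {A : Type*} [AddCommGroup A] {δ δ' : ℝ} {k : ℕ} {S : Set X}

/-- The cochain `c` is a cocycle relative to `S` on all simplices of diameter less than `δ`. -/
structure IsCocycleAtScale (δ : ℝ) (S : Set X) (c : List X → A) : Prop where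
  map_nil : c [] = 0
  coboundary_eq_zero : ∀ l, IsSmall δ l → coboundary c l = 0
  eq_zero : ∀ l, IsSmall δ l → IsNear δ S l → c l = 0

lemma IsCocycleAtScale.mono {c : List X → A} (hc : IsCocycleAtScale δ' S c) (h : δ ≤ δ') :
    IsCocycleAtScale δ S c where
  map_nil := hc.map_nil
  coboundary_eq_zero l hl := hc.coboundary_eq_zero l (hl.mono h)
  eq_zero l hl hn := hc.eq_zero l (hl.mono h) (hn.mono h)

lemma IsRelCocycle.exists_isCocycleAtScale {c : List X → A} (hc : IsRelCocycle k S c) :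
    ∃ c' : List X → A, c' =ᶠ[smallNear (k + 1) univ] c ∧ ∃ δ > 0, IsCocycleAtScale δ S c' := by
  obtain ⟨δ, hδ, hcob⟩ := eventually_smallNear_univ.1 hc.coboundary_eq
  obtain ⟨δ', hδ', hzero⟩ := eventually_smallNear.1 hc.eq_zero
  refine ⟨fun l => if l.length = k + 1 then c l else 0, ?_, min δ δ', lt_min hδ hδ', ?_, ?_, ?_⟩
  · filter_upwards [eventually_length] with l hl using if_pos hl
  · simp
  · intro l hl
    by_cases hlen : l.length = k + 2
    · rw [coboundary_congr (c' := c) fun m _ hm => if_pos (by lia)]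
      exact hcob l hlen (hl.mono (min_le_left _ _))
    · exact coboundary_eq_zero fun m _ hm => if_neg (by lia)
  · intro l hl hn
    split_ifs with hlen
    · exact hzero l hlen (hl.mono (min_le_right _ _)) (hn.mono (min_le_right _ _))
    · rfl

/-- The chain `z` is a cycle of degree `k` relative to the `δ`-neighbourhood of `S`, made of
simplices of diameter less than `δ`. -/
structure IsRelCycle (δ : ℝ) (k : ℕ) (S : Set X) (z : Chain R X) : Prop where
  mem : z ∈ supported R R {l | l.length = k + 1 ∧ IsSmall δ l}
  boundary_mem : boundary z ∈ supported R R {m | m.length = k ∧ IsSmall δ m ∧ IsNear δ S m}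

lemma IsRelCycle.mono {z : Chain R X} (hz : IsRelCycle δ k S z) (h : δ ≤ δ') :
    IsRelCycle δ' k S z where
  mem := Finsupp.supported_mono (fun _ hl => by exact ⟨hl.1, hl.2.mono h⟩) hz.mem
  boundary_mem := Finsupp.supported_mono
    (fun _ hm => by exact ⟨hm.1, hm.2.1.mono h, hm.2.2.mono h⟩) hz.boundary_mem

lemma IsRelCoboundary.exists_pos_linearCombination_eq_zero {c : List X → R}
    (hc : IsRelCoboundary k S c) :
    ∃ δ > 0, ∀ z, IsRelCycle δ k S z → linearCombination R c z = 0 := by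
  obtain ⟨b, hb, hcb⟩ := hc
  obtain ⟨δ, hδ, hb⟩ := eventually_smallNear.1 hb
  obtain ⟨δ', hδ', hcb⟩ := eventually_smallNear_univ.1 hcb
  refine ⟨min δ δ', lt_min hδ hδ', fun z hz => ?_⟩
  calc linearCombination R c z = linearCombination R (coboundary b) z :=
        map_eq_of_mem_supported _ _ (fun l hl => by
          simpa using hcb l hl.1 (hl.2.mono (min_le_right _ _))) hz.mem
    _ = linearCombination R b (boundary z) := (linearCombination_boundary b z).symm
    _ = 0 := map_eq_of_mem_supported (linearCombination R b) 0 (fun m hm => by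
          simpa using hb m hm.1 (hm.2.1.mono (min_le_left _ _)) (hm.2.2.mono (min_le_left _ _)))
          hz.boundary_mem

lemma boundary_mem_of_small {z : Chain R X}
    (hz : z ∈ supported R R {l : List X | l.length = k + 1 ∧ IsSmall δ l}) :
    boundary z ∈ supported R R {m : List X | m.length = k ∧ IsSmall δ m} :=
  map_mem_of_mem_supported boundary (fun l hl => Finsupp.supported_mono (fun m hm => by
    exact ⟨by have := hl.1; have := hm.2; lia, hl.2.subset hm.1.subset⟩) (boundary_single_mem l)) hz

lemma exists_linearMap_eq_on {F U W : Type*} [Field F] [AddCommGroup U] [AddCommGroup W]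
    [Module F U] [Module F W] (φ : U →ₗ[F] W) (f : U →ₗ[F] F) (V : Submodule F U)
    (N : Submodule F W) (h : ∀ v ∈ V, φ v ∈ N → f v = 0) :
    ∃ b : W →ₗ[F] F, (∀ w ∈ N, b w = 0) ∧ ∀ v ∈ V, b (φ v) = f v := by
  obtain ⟨β, hβ⟩ : f ∘ₗ V.subtype ∈ LinearMap.range (N.mkQ ∘ₗ φ ∘ₗ V.subtype).dualMap := by
    rw [LinearMap.range_dualMap_eq_dualAnnihilator_ker, Submodule.mem_dualAnnihilator]
    exact fun v hv => h v v.2 ((Submodule.Quotient.mk_eq_zero N).1 hv)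
  refine ⟨β ∘ₗ N.mkQ, fun w hw => ?_, fun v hv => LinearMap.congr_fun hβ ⟨v, hv⟩⟩
  rw [LinearMap.comp_apply, Submodule.mkQ_apply, (Submodule.Quotient.mk_eq_zero N).2 hw, map_zero]

theorem exists_isRelCycle_of_not_isRelCoboundary {F : Type*} [Field F] {c : List X → F}
    (hδ : 0 < δ) (hc : ¬IsRelCoboundary k S c) :
    ∃ z : Chain F X, IsRelCycle δ k S z ∧ linearCombination F c z ≠ 0 := by
  by_contra! hzero
  obtain ⟨b, hb_near, hb⟩ := exists_linearMap_eq_on boundary (linearCombination F c)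
    (supported F F {l : List X | l.length = k + 1 ∧ IsSmall δ l})
    (supported F F {m : List X | IsNear δ S m}) fun z hz hnear => hzero z ⟨hz, fun m hm => by
      obtain ⟨hlen, hsmall⟩ := boundary_mem_of_small hz hm
      exact ⟨hlen, hsmall, hnear hm⟩⟩
  refine hc ⟨fun m => b (single m 1), eventually_smallNear.2 ⟨δ, hδ, fun m _ _ hm => ?_⟩,
    eventually_smallNear_univ.2 ⟨δ, hδ, fun l hlen hl => ?_⟩⟩
  · exact hb_near _ (single_mem hm)
  · rw [← map_boundary_single b, hb _ (single_mem (by exact ⟨hlen, hl⟩))]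
    simp

end Scale

section CrossProductCocycle

variable [PseudoMetricSpace X] [PseudoMetricSpace Y] {A : Set X} {B : Set Y} {δ : ℝ} {k j : ℕ}

/-- The pairs of lists of diameter less than `δ`, one of which is near the set `A` or `B`. -/
def smallNearPairs (δ : ℝ) (A : Set X) (B : Set Y) : Set (List X × List Y) :=
  {p | IsSmall δ p.1 ∧ IsSmall δ p.2 ∧ (IsNear δ A p.1 ∨ IsNear δ B p.2)}

lemma IsNear.of_subset {S : Set X} {l m : List X} (h : IsNear (δ / 2) S l)
    (hl : IsSmall (δ / 2) l) (hm : m ⊆ l) (hne : m ≠ []) : IsNear δ S m := by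
  obtain ⟨x, hx, a, ha, hxa⟩ := h
  obtain ⟨y, hy⟩ := List.exists_mem_of_ne_nil m hne
  exact ⟨y, hy, a, ha, by linarith [dist_triangle y x a, hl y (hm hy) x hx]⟩

lemma mem_smallNearPairs_of_subset {p q : List X × List Y} (hδ : 0 < δ)
    (hp : p ∈ smallNearPairs (δ / 2) A B) (h₁ : q.1 ⊆ p.1) (h₂ : q.2 ⊆ p.2)
    (hne : q.1 ≠ [] ∧ q.2 ≠ []) : q ∈ smallNearPairs δ A B :=
  ⟨(hp.1.subset h₁).mono (half_le_self hδ.le), (hp.2.1.subset h₂).mono (half_le_self hδ.le),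
    hp.2.2.imp (fun h => h.of_subset hp.1 h₁ hne.1) fun h => h.of_subset hp.2.1 h₂ hne.2⟩

lemma isSmall_prod_iff {l : List (X × Y)} :
    IsSmall δ l ↔ IsSmall δ (l.map Prod.fst) ∧ IsSmall δ (l.map Prod.snd) :=
  ⟨fun h => ⟨h.map_fst, h.map_snd⟩, fun h _ hq _ hq' => max_lt
    (h.1 _ (List.mem_map_of_mem hq) _ (List.mem_map_of_mem hq'))
    (h.2 _ (List.mem_map_of_mem hq) _ (List.mem_map_of_mem hq'))⟩

lemma isNear_prod_iff {l : List (X × Y)} : IsNear δ {p : X × Y | p.1 ∈ A ∨ p.2 ∈ B} l ↔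
    IsNear δ A (l.map Prod.fst) ∨ IsNear δ B (l.map Prod.snd) := by
  constructor
  · rintro ⟨q, hq, a, ha | ha, hqa⟩
    · exact .inl ⟨_, List.mem_map_of_mem hq, a.1, ha, (le_max_left _ _).trans_lt hqa⟩
    · exact .inr ⟨_, List.mem_map_of_mem hq, a.2, ha, (le_max_right _ _).trans_lt hqa⟩
  · rintro (⟨_, hx, a, ha, hxa⟩ | ⟨_, hy, b, hb, hyb⟩)
    · obtain ⟨q, hq, rfl⟩ := List.mem_map.1 hx
      exact ⟨q, hq, (a, q.2), .inl ha, max_lt hxa (by simpa using dist_nonneg.trans_lt hxa)⟩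
    · obtain ⟨q, hq, rfl⟩ := List.mem_map.1 hy
      exact ⟨q, hq, (q.1, b), .inr hb, max_lt (by simpa using dist_nonneg.trans_lt hyb) hyb⟩

lemma map_mem_smallNearPairs_iff {l : List (X × Y)} :
    (l.map Prod.fst, l.map Prod.snd) ∈ smallNearPairs δ A B ↔
      IsSmall δ l ∧ IsNear δ {p : X × Y | p.1 ∈ A ∨ p.2 ∈ B} l := by
  rw [isSmall_prod_iff, isNear_prod_iff, and_assoc]
  rfl

lemma crossProduct_tensorBoundary_eq_zero {c : List X → R} {c' : List Y → R}
    (hc : IsCocycleAtScale δ A c) (hc' : IsCocycleAtScale δ B c') {z : TensorChain R X Y}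
    (hz : z ∈ supported R R {p | IsSmall δ p.1 ∧ IsSmall δ p.2}) :
    crossProduct c c' (tensorBoundary z) = 0 :=
  map_eq_of_mem_supported (crossProduct c c' ∘ₗ tensorBoundary) 0 (fun _ hp =>
    crossProduct_tensorBoundary_single hc.map_nil hc'.map_nil (hc.coboundary_eq_zero _ hp.1)
      (hc'.coboundary_eq_zero _ hp.2)) hz

lemma crossProduct_eq_zero {c : List X → R} {c' : List Y → R} (hc : IsCocycleAtScale δ A c)
    (hc' : IsCocycleAtScale δ B c') {z : TensorChain R X Y}
    (hz : z ∈ supported R R (smallNearPairs δ A B)) : crossProduct c c' z = 0 := by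
  refine map_eq_of_mem_supported (crossProduct c c') 0 (fun p hp => ?_) hz
  obtain ⟨h₁, h₂, h⟩ := hp
  rw [crossProduct_single, LinearMap.zero_apply]
  rcases h with h | h
  · rw [hc.eq_zero _ h₁ h, zero_mul]
  · rw [hc'.eq_zero _ h₂ h, mul_zero]

variable {W : Chain R (X × Y) →ₗ[R] TensorChain R X Y} {G : TensorChain R X Y →ₗ[R] Chain R (X × Y)}

lemma isRelCocycle_crossProduct (hW : IsAlexanderWhitney W) (hδ : 0 < δ) {c : List X → R}
    {c' : List Y → R} (hc : IsCocycleAtScale δ A c) (hc' : IsCocycleAtScale δ B c') :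
    IsRelCocycle k {p : X × Y | p.1 ∈ A ∨ p.2 ∈ B} fun l => crossProduct c c' (W (single l 1)) where
  coboundary_eq := eventually_smallNear_univ.2 ⟨δ, hδ, fun l _ hl => by
    refine (map_boundary_single (crossProduct c c' ∘ₗ W) l).symm.trans ?_
    rw [LinearMap.comp_apply, ← hW.comm]
    refine crossProduct_tensorBoundary_eq_zero hc hc'
      (Finsupp.supported_mono (fun p hp => ?_) (hW.mem l))
    exact ⟨hl.map_fst.subset hp.2.2.1, hl.map_snd.subset hp.2.2.2⟩⟩
  eq_zero := eventually_smallNear.2 ⟨δ / 2, half_pos hδ, fun l hlen hl hn => by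
    refine crossProduct_eq_zero hc hc' (Finsupp.supported_mono (fun p hp => ?_) (hW.mem l))
    exact mem_smallNearPairs_of_subset hδ (map_mem_smallNearPairs_iff.2 ⟨hl, hn⟩) hp.2.2.1 hp.2.2.2
      (ne_nil_of_tensorDegree_pos hp.1 (by rw [hp.2.1]; lia))⟩

section Cycles

variable {z : Chain R X} {w : Chain R Y} (hz : IsRelCycle δ k A z) (hw : IsRelCycle δ j B w)
include hz hw

lemma tensor_mem_of_isRelCycle : tensor z w ∈ supported R R {p | p ∈ tensorBasis X Y ∧
    tensorDegree p = k + j + 1 ∧ IsSmall δ p.1 ∧ IsSmall δ p.2} := by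
  refine Finsupp.supported_mono ?_ (tensor_mem hz.mem hw.mem)
  rintro ⟨a, b⟩ ⟨⟨ha, ha'⟩, hb, hb'⟩
  exact ⟨mem_tensorBasis_of_ne_nil (List.ne_nil_of_length_eq_add_one ha)
    (List.ne_nil_of_length_eq_add_one hb), by unfold tensorDegree; lia, ha', hb'⟩

lemma tensorBoundary_tensor_mem_of_isRelCycle (hk : k ≠ 0) (hj : j ≠ 0) :
    tensorBoundary (tensor z w) ∈ supported R R {p | p ∈ tensorBasis X Y ∧
      tensorDegree p = k + j ∧ p ∈ smallNearPairs δ A B} := by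
  have hz₀ : augmentation z = 0 := augmentation_eq_zero (by lia) (fun l hl => hl.1) hz.mem
  have hw₀ : augmentation w = 0 := augmentation_eq_zero (by lia) (fun l hl => hl.1) hw.mem
  rw [tensorBoundary_tensor, truncBoundary_apply, truncBoundary_apply, hz₀, hw₀, zero_smul,
    zero_smul, sub_zero, sub_zero, zero_mul, zero_smul, add_zero]
  have hbasis {a : List X} {b : List Y} (ha : a.length ≠ 0) (hb : b.length ≠ 0) :
      (a, b) ∈ tensorBasis X Y :=
    mem_tensorBasis_of_ne_nil (by simpa using ha) (by simpa using hb)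
  refine Submodule.add_mem _
    (Finsupp.supported_mono ?_ (tensor_mem hz.boundary_mem hw.mem))
    (Finsupp.supported_mono ?_ (tensor_mem (degreeSign_mem hz.mem) hw.boundary_mem))
  · rintro ⟨a, b⟩ ⟨⟨ha, ha', hn⟩, hb, hb'⟩
    exact ⟨hbasis (by lia) (by lia), by unfold tensorDegree; lia, ha', hb', .inl hn⟩
  · rintro ⟨a, b⟩ ⟨⟨ha, ha'⟩, hb, hb', hn⟩
    exact ⟨hbasis (by lia) (by lia), by unfold tensorDegree; lia, ha', hb', .inr hn⟩

end Cycles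

lemma IsRelCycle.map_tensor (hG : IsEilenbergZilber G) (hδ : 0 < δ) (hk : k ≠ 0) (hj : j ≠ 0)
    {z : Chain R X} {w : Chain R Y} (hz : IsRelCycle (δ / 2) k A z)
    (hw : IsRelCycle (δ / 2) j B w) :
    IsRelCycle δ (k + j) {p : X × Y | p.1 ∈ A ∨ p.2 ∈ B} (G (tensor z w)) := by
  have hzw := tensor_mem_of_isRelCycle hz hw
  have hmap {a : List X} {b : List Y} {l : List (X × Y)}
      (hl : ∀ q ∈ l, q ∈ {q : X × Y | q.1 ∈ a ∧ q.2 ∈ b}) :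
      l.map Prod.fst ⊆ a ∧ l.map Prod.snd ⊆ b :=
    ⟨List.forall_mem_map.2 fun q hq => (hl q hq).1, List.forall_mem_map.2 fun q hq => (hl q hq).2⟩
  constructor
  · refine map_mem_of_mem_supported G (fun p hp => ?_) hzw
    refine Finsupp.supported_mono (fun l hl => ?_) (hG.mem p hp.1)
    refine ⟨hl.1.trans hp.2.1, (isSmall_prod_iff.2 ⟨hp.2.2.1.subset (hmap hl.2).1,
      hp.2.2.2.subset (hmap hl.2).2⟩).mono (half_le_self hδ.le)⟩
  · rw [hG.comm_of_mem (Finsupp.supported_mono (fun p hp => hp.1) hzw)]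
    refine map_mem_of_mem_supported G (fun p hp => ?_)
      (tensorBoundary_tensor_mem_of_isRelCycle hz hw hk hj)
    refine Finsupp.supported_mono (fun l hl => ?_) (hG.mem p hp.1)
    have hlen := hl.1.trans hp.2.1
    have hne : l ≠ [] := List.ne_nil_of_length_pos (by lia)
    exact ⟨hlen, map_mem_smallNearPairs_iff.1 (mem_smallNearPairs_of_subset hδ hp.2.2
      (hmap hl.2).1 (hmap hl.2).2 (by simpa using hne))⟩

lemma crossProduct_comp_tensor (hW : IsAlexanderWhitney W) (hG : IsEilenbergZilber G) (hδ : 0 < δ)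
    (hk : k ≠ 0) (hj : j ≠ 0) {c : List X → R} {c' : List Y → R} (hc : IsCocycleAtScale δ A c)
    (hc' : IsCocycleAtScale δ B c') {z : Chain R X} {w : Chain R Y}
    (hz : IsRelCycle (δ / 2) k A z) (hw : IsRelCycle (δ / 2) j B w) :
    crossProduct c c' (W (G (tensor z w))) =
      linearCombination R c z * linearCombination R c' w := by
  obtain ⟨L, hL⟩ := hW.exists_homotopy hG
  have hzw := tensor_mem_of_isRelCycle hz hw
  have hhom : tensorBoundary (L (tensor z w)) =
      W (G (tensor z w)) - tensor z w - L (tensorBoundary (tensor z w)) :=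
    map_eq_of_mem_supported (tensorBoundary ∘ₗ L)
      (W ∘ₗ G - LinearMap.id (R := R) - L ∘ₗ tensorBoundary) (fun p hp => (hL p hp.1).2) hzw
  have hleft : crossProduct c c' (tensorBoundary (L (tensor z w))) = 0 := by
    refine crossProduct_tensorBoundary_eq_zero (hc.mono (half_le_self hδ.le))
      (hc'.mono (half_le_self hδ.le)) (map_mem_of_mem_supported L (fun p hp => ?_) hzw)
    refine Finsupp.supported_mono (fun q hq => ?_) (hL p hp.1).1
    exact ⟨hp.2.2.1.subset hq.2.2.1, hp.2.2.2.subset hq.2.2.2⟩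
  have hright : crossProduct c c' (L (tensorBoundary (tensor z w))) = 0 := by
    refine crossProduct_eq_zero hc hc' (map_mem_of_mem_supported L (fun p hp => ?_)
      (tensorBoundary_tensor_mem_of_isRelCycle hz hw hk hj))
    refine Finsupp.supported_mono (fun q hq => ?_) (hL p hp.1).1
    exact mem_smallNearPairs_of_subset hδ hp.2.2 hq.2.2.1 hq.2.2.2
      (ne_nil_of_tensorDegree_pos hq.1 (by rw [hq.2.1]; lia))
  rw [hhom, map_sub, map_sub, hright, crossProduct_tensor, sub_zero, sub_eq_zero] at hleft
  exact hleft

theorem not_relAcyclic_prod {F : Type*} [Field F] (hk : k ≠ 0) (hj : j ≠ 0)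
    (hA : ¬RelAcyclic F k A) (hB : ¬RelAcyclic F j B) :
    ¬RelAcyclic F (k + j) {p : X × Y | p.1 ∈ A ∨ p.2 ∈ B} := by
  intro hAB
  simp only [RelAcyclic, not_forall] at hA hB
  obtain ⟨c₀, hc₀, hc₀_not⟩ := hA
  obtain ⟨c₀', hc₀', hc₀'_not⟩ := hB
  obtain ⟨c, hcc₀, δ₁, hδ₁, hc⟩ := hc₀.exists_isCocycleAtScale
  obtain ⟨c', hcc₀', δ₂, hδ₂, hc'⟩ := hc₀'.exists_isCocycleAtScale
  obtain ⟨W, hW⟩ := exists_isAlexanderWhitney F X Y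
  obtain ⟨G, hG⟩ := exists_isEilenbergZilber F X Y
  obtain ⟨δ₃, hδ₃, hzero⟩ := (hAB _ (isRelCocycle_crossProduct hW (lt_min hδ₁ hδ₂)
    (hc.mono (min_le_left _ _))
    (hc'.mono (min_le_right _ _)))).exists_pos_linearCombination_eq_zero
  obtain ⟨δ, hδ, hle⟩ : ∃ δ > 0, δ ≤ δ₁ ∧ δ ≤ δ₂ ∧ δ ≤ δ₃ :=
    ⟨min δ₁ (min δ₂ δ₃), by positivity, by simp⟩
  obtain ⟨z, hz, hcz⟩ := exists_isRelCycle_of_not_isRelCoboundary (half_pos hδ)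
    fun h => hc₀_not (h.congr hcc₀)
  obtain ⟨w, hw, hcw⟩ := exists_isRelCycle_of_not_isRelCoboundary (half_pos hδ)
    fun h => hc₀'_not (h.congr hcc₀')
  refine mul_ne_zero hcz hcw ?_
  rw [← crossProduct_comp_tensor hW hG hδ hk hj (hc.mono hle.1) (hc'.mono hle.2.1) hz hw,
    ← hzero _ ((hz.map_tensor hG hδ hk hj hw).mono hle.2.2)]
  exact map_eq_of_single (crossProduct c c' ∘ₗ W) (linearCombination F _) (fun l => by simp) _

end CrossProductCocycle

/-! ### Comparison with Čech cohomology with compact supports -/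

/-- The filter of lists of length `k` all of whose entries are close to some point of `S`. -/
def nearDiag [TopologicalSpace Y] (k : ℕ) (S : Set Y) : Filter (List Y) :=
  ⨆ y ∈ S, (𝓝 y).lift' fun u => {l | l.length = k ∧ ∀ x ∈ l, x ∈ u}

section Topological

variable {A B : Type*} [AddCommGroup A] [TopologicalSpace X] [TopologicalSpace Y]
  [TopologicalSpace B] {k : ℕ} {S : Set Y}

omit [TopologicalSpace Y] in
lemma monotone_lists_in (k : ℕ) : Monotone fun u : Set Y => {l : List Y | l.length = k ∧
    ∀ x ∈ l, x ∈ u} :=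
  fun _ _ h _ ⟨hl, hx⟩ => ⟨hl, fun x hxl => h (hx x hxl)⟩

lemma eventually_nearDiag {p : List Y → Prop} : (∀ᶠ l in nearDiag k S, p l) ↔
    ∀ y ∈ S, ∃ u ∈ 𝓝 y, ∀ l : List Y, l.length = k → (∀ x ∈ l, x ∈ u) → p l := by
  simp only [nearDiag, eventually_iSup, eventually_lift'_iff (monotone_lists_in k), mem_ofPred_eq,
    and_imp]

lemma eventually_nearDiag_open {p : List Y → Prop} : (∀ᶠ l in nearDiag k S, p l) ↔
    ∀ y ∈ S, ∃ u, IsOpen u ∧ y ∈ u ∧ ∀ l : List Y, l.length = k → (∀ x ∈ l, x ∈ u) → p l := by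
  refine eventually_nearDiag.trans (forall₂_congr fun y _ => ⟨fun ⟨u, hu, hp⟩ => ?_,
    fun ⟨u, hu, hy, hp⟩ => ⟨u, hu.mem_nhds hy, hp⟩⟩)
  obtain ⟨v, hvu, hv, hy⟩ := mem_nhds_iff.1 hu
  exact ⟨v, hv, hy, fun l hl hx => hp l hl fun x hxl => hvu (hx x hxl)⟩

lemma nearDiag_mono {T : Set Y} (h : S ⊆ T) : nearDiag k S ≤ nearDiag k T :=
  biSup_mono h

lemma nearDiag_coboundary_eventuallyEq {c c' : List Y → A} (h : c =ᶠ[nearDiag (k + 1) S] c') :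
    coboundary c =ᶠ[nearDiag (k + 2) S] coboundary c' := by
  refine eventually_nearDiag.2 fun y hy => ?_
  obtain ⟨u, hu, hcc'⟩ := eventually_nearDiag.1 h y hy
  exact ⟨u, hu, fun l hl hx => coboundary_congr fun m hml hm =>
    hcc' m (by omega) fun x hxm => hx x (hml.subset hxm)⟩

lemma eventually_nearDiag_cons {p : List Y → Prop} {y : Y}
    (h : ∀ᶠ l in nearDiag (k + 1) {y}, p l) : ∀ᶠ l in nearDiag k {y}, p (y :: l) := by
  simp only [eventually_nearDiag, mem_singleton_iff, forall_eq] at h ⊢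
  obtain ⟨u, hu, hp⟩ := h
  exact ⟨u, hu, fun l hl hx => hp _ (by simp [hl])
    (List.forall_mem_cons.2 ⟨mem_of_mem_nhds hu, hx⟩)⟩

lemma eventually_nearDiag_univ_iff {i : B → Y} (hi : IsOpenEmbedding i) {p : List Y → Prop} :
    (∀ᶠ l in nearDiag k univ, p l) ↔
      (∀ᶠ m in nearDiag k univ, p (m.map i)) ∧ ∀ᶠ l in nearDiag k (range i)ᶜ, p l := by
  rw [← union_compl_self (range i)]
  simp only [eventually_nearDiag, mem_union, or_imp, forall_and, forall_mem_range, mem_univ,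
    true_imp_iff]
  refine and_congr_left' (forall_congr' fun b => ⟨fun ⟨u, hu, hp⟩ => ?_, fun ⟨u, hu, hp⟩ => ?_⟩)
  · exact ⟨i ⁻¹' u, hi.continuous.continuousAt hu, fun m hm hx =>
      hp _ (by simpa using hm) (List.forall_mem_map.2 hx)⟩
  · refine ⟨i '' u, hi.isOpenMap.image_mem_nhds hu, fun l hl hx => ?_⟩
    obtain ⟨m, rfl⟩ : l ∈ range (List.map i) := by
      rw [range_list_map]
      exact fun x hxl => image_subset_range _ _ (hx x hxl)
    exact hp m (by simpa using hl) fun x hxm =>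
      (hi.injective.mem_set_image).1 (hx _ (List.mem_map_of_mem hxm))

variable (A) in
/-- Vanishing of the relative Alexander–Spanier cohomology `H^k(Y, S; A)` of a topological space,
for `k ≥ 1`. -/
def TopRelAcyclic (k : ℕ) (S : Set Y) : Prop :=
  ∀ c : List Y → A, coboundary c =ᶠ[nearDiag (k + 2) univ] 0 → c =ᶠ[nearDiag (k + 1) S] 0 →
    ∃ b : List Y → A, b =ᶠ[nearDiag k S] 0 ∧ c =ᶠ[nearDiag (k + 1) univ] coboundary b

lemma exists_eventuallyEq_forall_meets [NormalSpace Y] (hS : IsClosed S) {c : List Y → A}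
    (hc : c =ᶠ[nearDiag k S] 0) : ∃ V, IsOpen V ∧ S ⊆ V ∧ ∃ c' : List Y → A,
      c' =ᶠ[nearDiag k univ] c ∧ ∀ l, (∃ x ∈ l, x ∈ V) → c' l = 0 := by
  classical
  choose! u hu hyu hc using eventually_nearDiag_open.1 hc
  obtain ⟨V, hV, hSV, hVu⟩ := normal_exists_closure_subset hS (isOpen_biUnion hu)
    fun y hy => mem_biUnion hy (hyu y hy)
  refine ⟨V, hV, hSV, fun l => if ∃ x ∈ l, x ∈ V then 0 else c l, ?_, fun l hl => if_pos hl⟩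
  refine eventually_nearDiag.2 fun y _ => ?_
  by_cases hy : y ∈ closure V
  · obtain ⟨z, hz, hyz⟩ := mem_iUnion₂.1 (hVu hy)
    exact ⟨u z, (hu z hz).mem_nhds hyz, fun l hl hx => by simp [hc z hz l hl hx]⟩
  · exact ⟨(closure V)ᶜ, isClosed_closure.isOpen_compl.mem_nhds hy, fun l _ hx =>
      if_neg fun ⟨x, hxl, hxV⟩ => hx x hxl (subset_closure hxV)⟩

lemma exists_transfer [T2Space X] [CompactSpace Y] [T2Space Y] {e : B → X} {i : B → Y}
    (he : IsOpenEmbedding e) (hi : IsOpenEmbedding i) (hk : k ≠ 0) {c : List Y → A}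
    (hc : c =ᶠ[nearDiag k (range i)ᶜ] 0) : ∃ c' : List X → A, c' =ᶠ[nearDiag k (range e)ᶜ] 0 ∧
      c' ∘ List.map e =ᶠ[nearDiag k univ] c ∘ List.map i := by
  obtain ⟨V, hV, hiV, c₀, hc₀, hcV⟩ :=
    exists_eventuallyEq_forall_meets hi.isOpen_range.isClosed_compl hc
  have hK : IsCompact (i ⁻¹' Vᶜ) :=
    hi.isInducing.isCompact_preimage' hV.isClosed_compl.isCompact (compl_subset_comm.1 hiV)
  refine ⟨extend (List.map e) (c₀ ∘ List.map i) 0, eventually_nearDiag.2 fun x hx => ?_, ?_⟩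
  · refine ⟨(e '' (i ⁻¹' Vᶜ))ᶜ, (hK.image he.continuous).isClosed.isOpen_compl.mem_nhds
      fun h => hx (image_subset_range _ _ h), fun l hl hxl => ?_⟩
    by_cases hle : ∃ m : List B, m.map e = l
    · obtain ⟨m, rfl⟩ := hle
      obtain ⟨b, hb⟩ := List.exists_mem_of_length_pos (l := m) (by grind)
      rw [he.injective.list_map.extend_apply]
      refine hcV _ ⟨i b, List.mem_map_of_mem hb, ?_⟩
      by_contra hbV
      exact hxl _ (List.mem_map_of_mem hb) ⟨b, hbV, rfl⟩
    · rw [extend_apply' _ _ _ hle]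
  · filter_upwards [((eventually_nearDiag_univ_iff hi).1 hc₀).1] with m hm
    rw [Function.comp_apply, he.injective.list_map.extend_apply]
    exact hm

omit [TopologicalSpace X] [TopologicalSpace Y] in
lemma coboundary_comp_map_eventuallyEq {e : B → X} {i : B → Y} {c : List X → A} {c' : List Y → A}
    (h : c ∘ List.map e =ᶠ[nearDiag (k + 1) univ] c' ∘ List.map i) :
    coboundary c ∘ List.map e =ᶠ[nearDiag (k + 2) univ] coboundary c' ∘ List.map i := by
  simpa [EventuallyEq, coboundary_comp_map] using nearDiag_coboundary_eventuallyEq h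

/-- Strong excision: `H^k(Y, S)` depends only on the locally compact space `Y \ S`. -/
theorem TopRelAcyclic.of_isOpenEmbedding [CompactSpace X] [T2Space X] [CompactSpace Y] [T2Space Y]
    {e : B → X} {i : B → Y} (he : IsOpenEmbedding e) (hi : IsOpenEmbedding i)
    (h : TopRelAcyclic A (k + 1) (range e)ᶜ) : TopRelAcyclic A (k + 1) (range i)ᶜ := by
  intro c hc hci
  obtain ⟨c', hc'e, hc'⟩ := exists_transfer he hi k.succ.succ_ne_zero hci
  have hcocycle : coboundary c' =ᶠ[nearDiag (k + 3) univ] 0 :=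
    (eventually_nearDiag_univ_iff he).2 ⟨(coboundary_comp_map_eventuallyEq hc').trans
      ((eventually_nearDiag_univ_iff hi).1 hc).1,
      (nearDiag_coboundary_eventuallyEq hc'e).trans (by simp)⟩
  obtain ⟨b', hb'e, hcb'⟩ := h c' hcocycle hc'e
  obtain ⟨b, hbi, hb⟩ := exists_transfer hi he k.succ_ne_zero hb'e
  refine ⟨b, hbi, (eventually_nearDiag_univ_iff hi).2 ⟨?_, ?_⟩⟩
  · have hcb : c' ∘ List.map e =ᶠ[nearDiag (k + 2) univ] coboundary b' ∘ List.map e :=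
      ((eventually_nearDiag_univ_iff he).1 hcb').1
    exact hc'.symm.trans (hcb.trans (coboundary_comp_map_eventuallyEq hb).symm)
  · exact hci.trans ((nearDiag_coboundary_eventuallyEq hbi).trans (by simp)).symm

lemma sub_coboundary_cons_eventuallyEq_zero {c : List Y → A} {y : Y}
    (hc : coboundary c =ᶠ[nearDiag (k + 1) {y}] 0) :
    c - coboundary (c ∘ List.cons y) =ᶠ[nearDiag k {y}] 0 :=
  (eventually_nearDiag_cons hc).mono fun l hl => by rwa [coboundary_cons] at hl

/-- The cone with apex `y` contracts the simplices close to `y`. -/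
theorem topRelAcyclic_singleton_iff (y : Y) :
    TopRelAcyclic A k {y} ↔ TopRelAcyclic A k (∅ : Set Y) := by
  have hsub (c : List Y → A) : coboundary (c - coboundary (c ∘ List.cons y)) = coboundary c := by
    ext l; simp
  constructor
  · intro h c hc _
    obtain ⟨b, -, hcb⟩ := h (c - coboundary (c ∘ List.cons y)) (by rwa [hsub])
      (sub_coboundary_cons_eventuallyEq_zero (hc.filter_mono (nearDiag_mono (subset_univ _))))
    refine ⟨b + c ∘ List.cons y, by simp [nearDiag, EventuallyEq], ?_⟩
    filter_upwards [hcb] with l hl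
    rw [map_add, Pi.add_apply, ← hl, Pi.sub_apply, sub_add_cancel]
  · intro h c hc hcy
    obtain ⟨b, -, hcb⟩ := h c hc (by simp [nearDiag, EventuallyEq])
    refine ⟨b - coboundary (b ∘ List.cons y), sub_coboundary_cons_eventuallyEq_zero ?_, by
      rwa [hsub]⟩
    exact (hcb.filter_mono (nearDiag_mono (subset_univ _))).symm.trans hcy

/-- The Alexander–Spanier cochain obtained by evaluating a function of lists on tuples. -/
def toQC (A : Type*) [AddCommGroup A] (m : ℕ) : (List Y → A) →+ AS.QC A Y m :=
  (QuotientAddGroup.mk' (AS.locZero A Y m)).comp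
    (LinearMap.funLeft ℤ A (List.ofFn (n := m + 1))).toAddMonoidHom

lemma toQC_surjective (m : ℕ) : Surjective (toQC (Y := Y) A m) :=
  (QuotientAddGroup.mk'_surjective _).comp
    (LinearMap.funLeft_surjective_of_injective ℤ A _ List.ofFn_injective)

lemma toQC_eq_zero_iff {m : ℕ} {c : List Y → A} :
    toQC A m c = 0 ↔ c =ᶠ[nearDiag (m + 1) univ] 0 := by
  refine (QuotientAddGroup.eq_zero_iff _).trans (Iff.trans ?_ eventually_nearDiag_open.symm)
  constructor
  · rintro ⟨U, ⟨hU, hcov⟩, hc⟩ y -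
    obtain ⟨u, hu, hy⟩ : y ∈ ⋃₀ U := hcov ▸ mem_univ y
    refine ⟨u, hU u hu, hy, fun l hl hx => ?_⟩
    obtain ⟨s, rfl⟩ : ∃ s : Fin (m + 1) → Y, List.ofFn s = l := hl ▸ ⟨l.get, List.ofFn_get l⟩
    exact hc s ⟨u, hu, fun i => hx _ (List.mem_ofFn.2 ⟨i, rfl⟩)⟩
  · intro hc
    choose u hu hy hc using fun y => hc y trivial
    refine ⟨range u, ⟨forall_mem_range.2 hu, eq_univ_of_forall fun y => ⟨u y, ⟨y, rfl⟩, hy y⟩⟩, ?_⟩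
    rintro s ⟨_, ⟨y, rfl⟩, hs⟩
    exact hc y _ (by simp) (List.forall_mem_ofFn_iff.2 hs)

lemma toQC_eq_iff {m : ℕ} {c c' : List Y → A} :
    toQC A m c = toQC A m c' ↔ c =ᶠ[nearDiag (m + 1) univ] c' := by
  rw [← sub_eq_zero, ← map_sub, toQC_eq_zero_iff, ← eventuallyEq_iff_sub]

omit [TopologicalSpace Y] in
lemma sum_succAbove_ofFn (k : ℕ) (c : List Y → A) (s : Fin (k + 1) → Y) :
    ∑ i : Fin (k + 1), ((-1 : ℤ) ^ (i : ℕ)) • c (List.ofFn (s ∘ i.succAbove)) =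
      coboundary c (List.ofFn s) := by
  induction k generalizing c with
  | zero => simp [coboundary_cons]
  | succ k ih =>
    rw [Fin.sum_univ_succ, List.ofFn_succ (f := s), coboundary_cons, ← ih]
    simp [pow_succ, Function.comp_def, sub_eq_add_neg]

lemma dQ_toQC (m : ℕ) (c : List Y → A) :
    AS.dQ A Y m (toQC A m c) = toQC A (m + 1) (coboundary c) :=
  congrArg (QuotientAddGroup.mk' _) (funext (sum_succAbove_ofFn (m + 1) c))

theorem nontrivial_ASH_iff (m : ℕ) :
    Nontrivial (AS.ASH A (m + 1) Y) ↔ ¬ TopRelAcyclic A (m + 1) (∅ : Set Y) := by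
  have hsub : Subsingleton (AS.ASH A (m + 1) Y) ↔
      ∀ x : AS.QC A Y (m + 1), AS.dQ A Y (m + 1) x = 0 → ∃ y, AS.dQ A Y m y = x := by
    rw [AS.ASH, QuotientAddGroup.subsingleton_iff, eq_top_iff]
    exact ⟨fun h x hx => h (trivial : (⟨x, hx⟩ : AS.cocycles A Y (m + 1)) ∈ _),
      fun h x _ => h x x.2⟩
  rw [← not_subsingleton_iff_nontrivial, hsub, not_iff_not, (toQC_surjective (m + 1)).forall]
  simp only [(toQC_surjective m).exists, dQ_toQC, toQC_eq_iff, toQC_eq_zero_iff, TopRelAcyclic]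
  simp [nearDiag, EventuallyEq, eq_comm]

theorem nontrivial_Hc_iff [CompactSpace X] [T2Space X] {e : B → X} (he : IsOpenEmbedding e)
    (m : ℕ) : Nontrivial (AS.Hc A (m + 1) B) ↔ ¬ TopRelAcyclic A (m + 1) (range e)ᶜ := by
  have : T2Space B := he.isEmbedding.t2Space
  have congr {Y : Type _} [TopologicalSpace Y] [CompactSpace Y] [T2Space Y] {i : B → Y}
      (hi : IsOpenEmbedding i) :
      TopRelAcyclic A (m + 1) (range i)ᶜ ↔ TopRelAcyclic A (m + 1) (range e)ᶜ :=
    ⟨.of_isOpenEmbedding hi he, .of_isOpenEmbedding he hi⟩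
  by_cases hB : CompactSpace B
  · rw [AS.Hc, if_pos hB, nontrivial_ASH_iff, ← congr .id, range_id, compl_univ]
  · have : LocallyCompactSpace B := he.locallyCompactSpace
    rw [AS.Hc, if_neg hB, nontrivial_ASH_iff, ← congr OnePoint.isOpenEmbedding_coe,
      OnePoint.compl_range_coe, topRelAcyclic_singleton_iff]

end Topological

/-! ### Pairs of compact metric spaces -/

section Metric

variable [PseudoMetricSpace X] {A : Type*} [AddCommGroup A] {k : ℕ} {S : Set X}

lemma smallNear_eq_nearDiag (hS : IsCompact S) : smallNear (k + 1) S = nearDiag (k + 1) S := by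
  refine le_antisymm (fun p hp => ?_) (fun p hp => ?_)
  · choose! u hu hyu hp using eventually_nearDiag_open.1 hp
    obtain ⟨δ, hδ, hball⟩ := lebesgue_number_lemma_of_metric (c := fun y : S => u y) hS
      (fun y => hu y y.2) (fun y hy => mem_iUnion.2 ⟨⟨y, hy⟩, hyu y hy⟩)
    refine eventually_smallNear.2 ⟨δ / 2, half_pos hδ, fun l hl hs ⟨x, hx, a, ha, hxa⟩ => ?_⟩
    obtain ⟨y, hy⟩ := hball a ha
    exact hp y y.2 l hl fun z hz => hy (Metric.mem_ball.2 (by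
      linarith [dist_triangle z x a, hs z hz x hx]))
  · obtain ⟨δ, hδ, hp⟩ := eventually_smallNear.1 hp
    refine eventually_nearDiag.2 fun y hy => ⟨Metric.ball y (δ / 2), Metric.ball_mem_nhds y
      (half_pos hδ), fun l hl hx => hp l hl (fun z hz w hw => ?_) ?_⟩
    · linarith [dist_triangle_right z w y, Metric.mem_ball.1 (hx z hz), Metric.mem_ball.1 (hx w hw)]
    · obtain ⟨x, hxl⟩ := List.exists_mem_of_length_pos (l := l) (by omega)
      exact ⟨x, hxl, y, hy, by linarith [Metric.mem_ball.1 (hx x hxl)]⟩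

lemma topRelAcyclic_iff [CompactSpace X] (hS : IsClosed S) :
    TopRelAcyclic A (k + 1) S ↔ RelAcyclic A (k + 1) S := by
  simp only [TopRelAcyclic, RelAcyclic, IsRelCoboundary, ← smallNear_eq_nearDiag isCompact_univ,
    ← smallNear_eq_nearDiag hS.isCompact]
  exact forall_congr' fun c => ⟨fun h hc => h hc.1 hc.2, fun h hc hcS => h ⟨hc, hcS⟩⟩

lemma tendsto_map_val_smallNear (S K : Set X) : Tendsto (List.map ((↑) : K → X))
    (smallNear k ((↑) ⁻¹' S)) (smallNear k S) := fun p hp => by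
  obtain ⟨δ, hδ, hp⟩ := eventually_smallNear.1 hp
  refine eventually_smallNear.2 ⟨δ, hδ, fun l hl hs ⟨x, hx, a, ha, hxa⟩ => hp _ (by simpa using hl)
    (List.forall_mem_map.2 fun y hy => List.forall_mem_map.2 fun z hz => hs y hy z hz)
    ⟨x, List.mem_map_of_mem hx, a, ha, hxa⟩⟩

lemma tendsto_map_smallNear_of_isNearest {K : Set X} {r : X → K}
    (hr : ∀ (x : X), ∀ a ∈ K, dist x (r x) ≤ dist x a) (hS : S ⊆ K) :
    Tendsto (List.map r) (smallNear k S) (smallNear k ((↑) ⁻¹' S)) := fun p hp => by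
  obtain ⟨δ, hδ, hp⟩ := eventually_smallNear.1 hp
  refine eventually_smallNear.2 ⟨δ / 5, by positivity, fun l hl hs ⟨x, hx, a, ha, hxa⟩ => ?_⟩
  have hclose (y : X) (hy : y ∈ l) : dist y (r y) < 2 * (δ / 5) := by
    linarith [hr y a (hS ha), dist_triangle y x a, hs y hy x hx]
  refine hp _ (by simpa using hl) (List.forall_mem_map.2 fun y hy =>
    List.forall_mem_map.2 fun z hz => ?_) ⟨r x, List.mem_map_of_mem hx, ⟨a, hS ha⟩, ha, ?_⟩
  · rw [Subtype.dist_eq]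
    linarith [dist_triangle4 (r y : X) y z (r z), hs y hy z hz, hclose y hy, hclose z hz,
      dist_comm (r y : X) y]
  · rw [Subtype.dist_eq]
    linarith [dist_triangle (r x : X) x a, hclose x hx, dist_comm (r x : X) x]

lemma relAcyclic_of_isEmpty [IsEmpty X] : RelAcyclic A k S := fun c _ =>
  ⟨0, .rfl, eventually_length.mono fun l hl => by
    cases l with
    | nil => simp at hl
    | cons x _ => exact isEmptyElim x⟩

end Metric

/-- The part `H^k(X, S) → H^k(K, S) → H^(k+1)(X, K)` of the long exact sequence of a triple; the
connecting map extends cochains from `K` along the nearest point map. -/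
theorem RelAcyclic.restrict [MetricSpace X] {A : Type*} [AddCommGroup A] {k : ℕ} {S K : Set X}
    (hK : IsCompact K) (hSK : S ⊆ K) (hXK : RelAcyclic A (k + 1) K) (hXS : RelAcyclic A k S) :
    RelAcyclic A k ((↑) ⁻¹' S : Set K) := by
  rcases K.eq_empty_or_nonempty with rfl | hne
  · exact relAcyclic_of_isEmpty
  choose r hrK hr using fun x => hK.exists_infDist_eq_dist hne x
  lift r to X → K using hrK
  replace hr (x a : X) (ha : a ∈ K) : dist x (r x) ≤ dist x a :=
    (hr x).ge.trans (Metric.infDist_le_dist_of_mem ha)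
  have hrval : r ∘ (↑) = (id : K → K) := funext fun a =>
    Subtype.ext (dist_le_zero.1 ((hr a a a.2).trans_eq (dist_self _))).symm
  intro c hc
  have hcK : coboundary (c ∘ List.map r) =ᶠ[smallNear (k + 2) K] 0 := by
    have := (tendsto_map_smallNear_of_isNearest hr subset_rfl).eventually
      (hc.coboundary_eq.filter_mono (smallNear_mono (subset_univ _)))
    exact this.mono fun l hl => (coboundary_comp_map r c l).trans hl
  obtain ⟨b, hb, hcb⟩ := hXK (coboundary (c ∘ List.map r)) ⟨by simp, hcK⟩
  have hcS : IsRelCocycle k S (c ∘ List.map r - b) := by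
    refine ⟨by rw [map_sub]; exact eventuallyEq_iff_sub.1 hcb, ?_⟩
    have := (tendsto_map_smallNear_of_isNearest hr hSK).eventually hc.eq_zero
    filter_upwards [this, hb.filter_mono (smallNear_mono hSK)] with l hl hbl
    simp_all
  obtain ⟨b', hb', hcb'⟩ := hXS _ hcS
  have hval : Tendsto (List.map ((↑) : K → X)) (smallNear (k + 1) univ) (smallNear (k + 1) K) := by
    simpa using tendsto_map_val_smallNear K K
  refine ⟨b' ∘ List.map (↑), (tendsto_map_val_smallNear S K).eventually hb', ?_⟩
  filter_upwards [hval.eventually hb,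
    (hval.mono_right (smallNear_mono (subset_univ K))).eventually hcb'] with l hbl hl
  rw [coboundary_comp_map, ← hl, Pi.sub_apply, hbl, Pi.zero_apply, sub_zero,
    Function.comp_apply, List.map_map, hrval, List.map_id]

/-! ### Cohomological dimension -/

lemma isLocallyClosed_of_locallyCompactSpace [TopologicalSpace X] [T2Space X] (B : Set X)
    [LocallyCompactSpace B] : IsLocallyClosed B := by
  refine ((isLocallyClosed_tfae B).out 0 2).2 fun x hx => ?_
  obtain ⟨N, hN, hxN⟩ := exists_compact_mem_nhds (⟨x, hx⟩ : B)
  obtain ⟨U, hU, hUN⟩ := (mem_nhds_subtype _ _ _).1 hxN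
  have hUB : ((↑) ⁻¹' B : Set U) = (↑) ⁻¹' ((↑) '' N : Set X) := by
    ext u
    constructor
    · exact fun hu => ⟨⟨u, hu⟩, hUN u.2, rfl⟩
    · rintro ⟨b, -, hb⟩
      exact mem_preimage.2 (hb.subst b.2)
  exact ⟨U, hU, hUB ▸ (Subtype.isCompact_iff.1 hN).isClosed.preimage continuous_subtype_val⟩

section CohDim

variable {A : Type*} [AddCommGroup A]

lemma cohDim_le_iff [TopologicalSpace X] {N : ℕ} : cohDim A X ≤ (N : ℕ∞) ↔
    ∀ k > N, ∀ B : Set X, LocallyCompactSpace B → ¬ Nontrivial (AS.Hc A k B) := by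
  rw [cohDim, sSup_le_iff]
  constructor
  · intro h k hk B hB hn
    exact hk.not_ge (Nat.cast_le.1 (h k ⟨k, rfl, B, hB, hn⟩))
  · rintro h _ ⟨k, rfl, B, hB, hn⟩
    exact Nat.cast_le.2 (not_lt.1 fun hk => h k hk B hB hn)

theorem cohDim_le_iff_relAcyclic [MetricSpace X] [CompactSpace X] {N : ℕ} :
    cohDim A X ≤ (N : ℕ∞) ↔ ∀ k > N, ∀ S : Set X, IsClosed S → RelAcyclic A k S := by
  refine cohDim_le_iff.trans ⟨fun h k hk S hS => ?_, fun h k hk B hB => ?_⟩ <;>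
    obtain ⟨m, rfl⟩ := Nat.exists_eq_add_one.2 (N.zero_le.trans_lt hk)
  · have hHc := h _ hk Sᶜ hS.isOpen_compl.locallyCompactSpace
    rwa [nontrivial_Hc_iff hS.isOpen_compl.isOpenEmbedding_subtypeVal, not_not,
      Subtype.range_coe, compl_compl, topRelAcyclic_iff hS] at hHc
  · have hBo := (isLocallyClosed_of_locallyCompactSpace B).isOpen_preimage_val_closure
    have hcl : IsCompact (closure B) := isClosed_closure.isCompact
    have : CompactSpace (closure B) := isCompact_iff_compactSpace.1 hcl
    have hrange : (range (inclusion (subset_closure (s := B))))ᶜ = (↑) ⁻¹' (closure B \ B) := by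
      ext x
      simp [range_inclusion]
    have hrest : IsClosed (closure B \ B) := by
      simpa using hcl.isClosed.isClosedEmbedding_subtypeVal.isClosedMap _ hBo.isClosed_compl
    rw [nontrivial_Hc_iff ⟨.inclusion subset_closure, by rw [range_inclusion]; exact hBo⟩,
      not_not, hrange, topRelAcyclic_iff (hrest.preimage continuous_subtype_val)]
    exact .restrict hcl sdiff_subset (h _ (by omega) _ isClosed_closure) (h _ hk _ hrest)

variable [MetricSpace X] [CompactSpace X] [MetricSpace Y] [CompactSpace Y] {n m : ℕ}

theorem cohDim_le_of_algebra (K : Type*) {F : Type*} [Field K] [Field F] [Algebra K F]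
    (h : cohDim K X ≤ (n : ℕ∞)) : cohDim F X ≤ (n : ℕ∞) :=
  cohDim_le_iff_relAcyclic.2 fun k hk S hS =>
    (cohDim_le_iff_relAcyclic.1 h k hk S hS).of_module

theorem cohDim_field_le_of_primeFields (hp : ∀ p : ℕ, p.Prime → cohDim (ZMod p) X ≤ (n : ℕ∞))
    (h0 : cohDim ℚ X ≤ (n : ℕ∞)) (F : Type*) [Field F] : cohDim F X ≤ (n : ℕ∞) := by
  obtain ⟨p, hF⟩ := CharP.exists F
  rcases CharP.char_is_prime_or_zero F p with hpp | rfl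
  · have := Fact.mk hpp
    let := ZMod.algebra F p
    exact cohDim_le_of_algebra (ZMod p) (hp p hpp)
  · have := CharP.charP_to_charZero F
    exact cohDim_le_of_algebra ℚ h0

theorem cohDim_prod_le {R : Type*} [CommRing R] (hX : cohDim R X ≤ (n : ℕ∞))
    (hY : cohDim R Y ≤ (m : ℕ∞)) : cohDim R (X × Y) ≤ ((n + m : ℕ) : ℕ∞) := by
  rw [cohDim_le_iff_relAcyclic] at *
  exact fun k hk C _ => relAcyclic_prod hX hY hk C

theorem cohDim_le_of_prod_self {F : Type*} [Field F]
    (h : cohDim F (X × X) ≤ ((2 * n + 1 : ℕ) : ℕ∞)) : cohDim F X ≤ (n : ℕ∞) := by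
  rw [cohDim_le_iff_relAcyclic] at *
  intro k hk S hS
  by_contra hnot
  exact not_relAcyclic_prod (by omega) (by omega) hnot hnot (h (k + k) (by omega) _
    ((hS.preimage continuous_fst).union (hS.preimage continuous_snd)))

theorem cohDim_int_le_add_one (hp : ∀ p : ℕ, p.Prime → cohDim (ZMod p) X ≤ (n : ℕ∞))
    (h0 : cohDim ℚ X ≤ (n : ℕ∞)) : cohDim ℤ X ≤ ((n + 1 : ℕ) : ℕ∞) := by
  simp only [cohDim_le_iff_relAcyclic] at *
  intro k hk S hS
  obtain ⟨i, rfl⟩ : ∃ i, k = i + 2 := Nat.exists_eq_add_of_le' (by omega)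
  exact .int (fun p hpp => hp p hpp _ (by omega) S hS) (h0 _ (by omega) S hS)

theorem cohDim_zmod_le_of_int {p : ℕ} (hp : p ≠ 0) (h : cohDim ℤ X ≤ (n : ℕ∞)) :
    cohDim (ZMod p) X ≤ (n : ℕ∞) := by
  rw [cohDim_le_iff_relAcyclic] at *
  exact fun k hk S hS => .zmod hp (h k hk S hS) (h (k + 1) (by omega) S hS)

theorem cohDim_rat_le_of_int (h : cohDim ℤ X ≤ (n : ℕ∞)) : cohDim ℚ X ≤ (n : ℕ∞) := by
  rw [cohDim_le_iff_relAcyclic] at *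
  exact fun k hk S hS => .rat (h k hk S hS)

end CohDim

end AlexanderSpanier

/-- **Lemma 14** (Dranishnikov–West).  For a compact metric space `X` the following are
equivalent: (1) `dim_F X ≤ n` for all fields `F`; (2) `dim_{ℤ/pℤ} X ≤ n` for all primes `p`
and `dim_ℚ X ≤ n`; (3) `dim_ℤ (X × X) ≤ 2n + 1`. -/
theorem cohDim_field_tfae (X : Type) [MetricSpace X] [CompactSpace X] (n : ℕ) :
    ((∀ (F : Type) (_ : Field F), cohDim F X ≤ (n : ℕ∞)) ↔
      ((∀ p : ℕ, p.Prime → cohDim (ZMod p) X ≤ (n : ℕ∞)) ∧ cohDim ℚ X ≤ (n : ℕ∞))) ∧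
    (((∀ p : ℕ, p.Prime → cohDim (ZMod p) X ≤ (n : ℕ∞)) ∧ cohDim ℚ X ≤ (n : ℕ∞)) ↔
      cohDim ℤ (X × X) ≤ 2 * (n : ℕ∞) + 1) := by
  rw [show 2 * (n : ℕ∞) + 1 = ((2 * n + 1 : ℕ) : ℕ∞) by push_cast; rfl]
  refine ⟨⟨fun h => ⟨fun p hp => ?_, h ℚ inferInstance⟩, fun ⟨hp, h0⟩ F _ =>
    AlexanderSpanier.cohDim_field_le_of_primeFields hp h0 F⟩,
    fun ⟨hp, h0⟩ => ?_, fun h => ⟨fun p hp => ?_, ?_⟩⟩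
  · have := Fact.mk hp
    exact h (ZMod p) inferInstance
  · rw [two_mul]
    exact AlexanderSpanier.cohDim_int_le_add_one
      (fun p hpp => AlexanderSpanier.cohDim_prod_le (hp p hpp) (hp p hpp))
      (AlexanderSpanier.cohDim_prod_le h0 h0)
  · have := Fact.mk hp
    exact AlexanderSpanier.cohDim_le_of_prod_self
      (AlexanderSpanier.cohDim_zmod_le_of_int hp.ne_zero h)
  · exact AlexanderSpanier.cohDim_le_of_prod_self (AlexanderSpanier.cohDim_rat_le_of_int h)
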